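/- Let (S,d) be a Busemann surface and let Q ⊆ S be any finite set of points (not necessarily in general position). Then the finite metric space (Q,d) is l1-embeddable: there exist N and a map φ : Q → ℝᴺ such that Σᵢ |φ(x)ᵢ − φ(y)ᵢ| = d(x,y) for all x, y ∈ Q. -/

import Mathlib

open Metric Set MeasureTheory

/-- `γ` is a geodesic on the interval `[a, b]`. -/
def IsGeodesicOn {S : Type*} [MetricSpace S] (γ : ℝ → S) (a b : ℝ) : Prop :=
  ∀ s ∈ Set.Icc a b, ∀ t ∈ Set.Icc a b, dist (γ s) (γ t) = |s - t|

/-- `γ` is a geodesic from `x` to `y`. -/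
def IsGeodesicFromTo {S : Type*} [MetricSpace S] (γ : ℝ → S) (x y : S) : Prop :=
  IsGeodesicOn γ 0 (dist x y) ∧ γ 0 = x ∧ γ (dist x y) = y

/-- A geodesic metric space: every pair of points is joined by a geodesic. -/
def IsGeodesicMetricSpace (S : Type*) [MetricSpace S] : Prop :=
  ∀ x y : S, ∃ γ : ℝ → S, IsGeodesicFromTo γ x y

/-- A Busemann space: a geodesic metric space in which the distance function between
any two geodesics is convex. -/
def IsBusemannSpace (S : Type*) [MetricSpace S] : Prop :=
  IsGeodesicMetricSpace S ∧
    ∀ (γ γ' : ℝ → S) (a b a' b' : ℝ), a ≤ b → a' ≤ b' →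
      IsGeodesicOn γ a b → IsGeodesicOn γ' a' b' →
      ConvexOn ℝ (Set.Icc (0 : ℝ) 1)
        (fun t => dist (γ ((1 - t) * a + t * b)) (γ' ((1 - t) * a' + t * b')))

/-- A Busemann surface: a Busemann space homeomorphic to the plane `ℝ²`. -/
def IsBusemannSurface (S : Type*) [MetricSpace S] : Prop :=
  IsBusemannSpace S ∧ Nonempty (S ≃ₜ (ℝ × ℝ))

/-- `G` is the image of a geodesic from `x` to `y`. -/
def IsGeodesicSegment {S : Type*} [MetricSpace S] (x y : S) (G : Set S) : Prop :=
  ∃ γ : ℝ → S, IsGeodesicFromTo γ x y ∧ G = γ '' Set.Icc 0 (dist x y)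

/-- Convexity of a set with respect to a geodesic-segment assignment `seg`. -/
def SegConvex {S : Type*} (seg : S → S → Set S) (R : Set S) : Prop :=
  ∀ p ∈ R, ∀ q ∈ R, seg p q ⊆ R

/-- The convex hull: the smallest `seg`-convex set containing `Q`. -/
def segConvexHull {S : Type*} (seg : S → S → Set S) (Q : Set S) : Set S :=
  ⋂₀ {R : Set S | SegConvex seg R ∧ Q ⊆ R}

/-- A line of `S`: the image of an isometric embedding of `ℝ` into `S`. -/
def IsLineSet {S : Type*} [MetricSpace S] (L : Set S) : Prop :=
  ∃ ℓ : ℝ → S, Isometry ℓ ∧ L = Set.range ℓ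

/-- An open halfplane determined by a line `L`: a connected component of `S \ L`. -/
def IsOpenHalfplane {S : Type*} [MetricSpace S] (L H : Set S) : Prop :=
  ∃ x, x ∉ L ∧ H = connectedComponentIn Lᶜ x

/-- A closed halfplane determined by a line `L`: an open halfplane together with `L`. -/
def IsClosedHalfplane {S : Type*} [MetricSpace S] (L H : Set S) : Prop :=
  ∃ H', IsOpenHalfplane L H' ∧ H = H' ∪ L

/-- `X` and `Y` are line-separable: they lie in different open halfplanes of some line. -/
def LineSeparable {S : Type*} [MetricSpace S] (X Y : Set S) : Prop :=
  ∃ L H₁ H₂ : Set S, IsLineSet L ∧ IsOpenHalfplane L H₁ ∧ IsOpenHalfplane L H₂ ∧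
    H₁ ≠ H₂ ∧ X ⊆ H₁ ∧ Y ⊆ H₂

/-- `X` and `Y` are weakly line-separable: they lie in different closed halfplanes of
some line. -/
def WeaklyLineSeparable {S : Type*} [MetricSpace S] (X Y : Set S) : Prop :=
  ∃ L H₁ H₂ : Set S, IsLineSet L ∧ IsClosedHalfplane L H₁ ∧ IsClosedHalfplane L H₂ ∧
    H₁ ≠ H₂ ∧ X ⊆ H₁ ∧ Y ⊆ H₂

/-- `Q` is in general position: no three distinct points of `Q` lie on a common line. -/
def InGeneralPosition {S : Type*} [MetricSpace S] (Q : Set S) : Prop :=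
  ∀ x ∈ Q, ∀ y ∈ Q, ∀ z ∈ Q, x ≠ y → y ≠ z → x ≠ z →
    ∀ L : Set S, IsLineSet L → ¬(x ∈ L ∧ y ∈ L ∧ z ∈ L)

/-- `L` is a tangent line of the set `K`. -/
def IsTangentLine {S : Type*} [MetricSpace S] (L K : Set S) : Prop :=
  IsLineSet L ∧ (K ∩ L).Nonempty ∧ ∃ H, IsClosedHalfplane L H ∧ K ⊆ H

/-- `L` is an inner bitangent of `K'` and `K''`. -/
def IsInnerBitangent {S : Type*} [MetricSpace S] (L K' K'' : Set S) : Prop :=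
  IsTangentLine L K' ∧ IsTangentLine L K'' ∧
    ∃ H₁ H₂, IsClosedHalfplane L H₁ ∧ IsClosedHalfplane L H₂ ∧ H₁ ≠ H₂ ∧
      K' ⊆ H₁ ∧ K'' ⊆ H₂


namespace BS

/-- The metric segment. -/
def seg {S : Type*} [MetricSpace S] (x y : S) : Set S := {z | dist x z + dist z y = dist x y}

/-- What we use of Busemann spaces. -/
class Bus (S : Type*) [MetricSpace S] : Prop where
  ex : ∀ x y : S, ∀ r : ℝ, 0 ≤ r → r ≤ dist x y → ∃ z ∈ seg x y, dist x z = r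
  conv : ∀ (x y x' y' z z' : S) (t : ℝ), 0 ≤ t → t ≤ 1 →
    dist x z = t * dist x y → dist z y = (1 - t) * dist x y →
    dist x' z' = t * dist x' y' → dist z' y' = (1 - t) * dist x' y' →
    dist z z' ≤ (1 - t) * dist x x' + t * dist y y'

section
variable {S : Type*} [MetricSpace S]

theorem mem_seg {x y z : S} : z ∈ seg x y ↔ dist x z + dist z y = dist x y := Iff.rfl

theorem geo_through (h : IsGeodesicMetricSpace S) {x y z : S} (hz : z ∈ seg x y) :
    ∃ γ : ℝ → S, IsGeodesicFromTo γ x y ∧ γ (dist x z) = z := by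
  obtain ⟨γ₁, h1, h10, h11⟩ := h x z
  obtain ⟨γ₂, h2, h20, h21⟩ := h z y
  rw [mem_seg] at hz
  have hxz : 0 ≤ dist x z := dist_nonneg
  have hzy : 0 ≤ dist z y := dist_nonneg
  let γ : ℝ → S := fun t => if t ≤ dist x z then γ₁ t else γ₂ (t - dist x z)
  have key : ∀ s t : ℝ, 0 ≤ s → s ≤ t → t ≤ dist x y → dist (γ s) (γ t) = t - s := by
    intro s t hs hst ht
    by_cases c2 : t ≤ dist x z
    · have c1 : s ≤ dist x z := hst.trans c2
      simp only [γ, if_pos c1, if_pos c2]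
      rw [h1 s ⟨hs, c1⟩ t ⟨by linarith, c2⟩, abs_sub_comm, abs_of_nonneg (by linarith)]
    · push Not at c2
      by_cases c1 : s ≤ dist x z
      · simp only [γ, if_pos c1, if_neg (not_le.2 c2)]
        have e1 : dist x (γ₁ s) = s := by
          have := h1 0 ⟨le_refl _, hxz⟩ s ⟨hs, c1⟩
          rw [h10] at this; rw [this, abs_sub_comm, sub_zero, abs_of_nonneg hs]
        have e2 : dist (γ₁ s) z = dist x z - s := by
          have := h1 s ⟨hs, c1⟩ (dist x z) ⟨hxz, le_refl _⟩
          rw [h11] at this; rw [this, abs_sub_comm, abs_of_nonneg (by linarith)]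
        have m : t - dist x z ∈ Set.Icc 0 (dist z y) := ⟨by linarith, by linarith⟩
        have e3 : dist z (γ₂ (t - dist x z)) = t - dist x z := by
          have := h2 0 ⟨le_refl _, hzy⟩ _ m
          rw [h20] at this; rw [this, abs_sub_comm, sub_zero, abs_of_nonneg m.1]
        have e4 : dist (γ₂ (t - dist x z)) y = dist z y - (t - dist x z) := by
          have := h2 _ m (dist z y) ⟨hzy, le_refl _⟩
          rw [h21] at this; rw [this, abs_sub_comm, abs_of_nonneg (by linarith)]
        have t1 := dist_triangle (γ₁ s) z (γ₂ (t - dist x z))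
        have t2 := dist_triangle4 x (γ₁ s) (γ₂ (t - dist x z)) y
        linarith
      · have c1' := not_le.1 c1
        simp only [γ, if_neg c1, if_neg (not_le.2 c2)]
        rw [h2 _ ⟨by linarith, by linarith⟩ _ ⟨by linarith, by linarith⟩]
        rw [abs_sub_comm, abs_of_nonneg (by linarith)]; ring
  refine ⟨γ, ⟨?_, ?_, ?_⟩, ?_⟩
  · intro s hs t ht
    rcases le_total s t with c | c
    · rw [key s t hs.1 c ht.2, abs_sub_comm, abs_of_nonneg (by linarith)]
    · rw [dist_comm, key t s ht.1 c hs.2, abs_of_nonneg (by linarith)]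
  · simp only [γ, if_pos hxz, h10]
  · by_cases c : dist x y ≤ dist x z
    · have : dist z y = 0 := by linarith
      have hh : dist x y = dist x z := by linarith
      simp only [γ, hh, if_pos le_rfl]
      rw [h11]; exact dist_eq_zero.1 this
    · simp only [γ, if_neg c]
      rw [show dist x y - dist x z = dist z y by linarith, h21]
  · simp only [γ, if_pos le_rfl, h11]

theorem bus_of (hB : IsBusemannSpace S) : Bus S := by
  obtain ⟨hg, hc⟩ := hB
  refine ⟨?_, ?_⟩
  · intro x y r hr hr'
    obtain ⟨γ, h1, h10, h11⟩ := hg x y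
    have a1 := h1 0 ⟨le_refl _, dist_nonneg⟩ r ⟨hr, hr'⟩
    have a2 := h1 r ⟨hr, hr'⟩ (dist x y) ⟨dist_nonneg, le_refl _⟩
    rw [h10, abs_sub_comm, sub_zero, abs_of_nonneg hr] at a1
    rw [h11, abs_sub_comm, abs_of_nonneg (by linarith)] at a2
    exact ⟨γ r, by rw [mem_seg, a1, a2]; ring, a1⟩
  · intro x y x' y' z z' t ht ht' e1 e2 e3 e4
    obtain ⟨γ, ⟨g1, g2, g3⟩, g4⟩ := geo_through hg (x := x) (y := y) (z := z) (by rw [mem_seg, e1, e2]; ring)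
    obtain ⟨γ', ⟨g1', g2', g3'⟩, g4'⟩ := geo_through hg (x := x') (y := y') (z := z') (by rw [mem_seg, e3, e4]; ring)
    have := hc γ γ' 0 (dist x y) 0 (dist x' y') dist_nonneg dist_nonneg g1 g1'
    have h := this.2 (show (0:ℝ) ∈ Set.Icc (0:ℝ) 1 by simp) (show (1:ℝ) ∈ Set.Icc (0:ℝ) 1 by simp)
      (show 0 ≤ 1 - t by linarith) ht (by ring)
    simp only [smul_eq_mul, mul_zero, mul_one, zero_add, sub_zero, one_mul, sub_self, zero_mul, add_zero, g2, g2', g3, g3'] at h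
    rw [← e1, ← e3, g4, g4'] at h
    exact h

theorem left_mem (x y : S) : x ∈ seg x y := by simp [mem_seg]
theorem right_mem (x y : S) : y ∈ seg x y := by simp [mem_seg]
theorem seg_symm (x y : S) : seg x y = seg y x := by
  ext z; rw [mem_seg, mem_seg, dist_comm y x, dist_comm y z, dist_comm z x]; constructor <;> intro h <;> linarith
theorem mem_symm {x y z : S} (h : z ∈ seg x y) : z ∈ seg y x := seg_symm x y ▸ h
theorem seg_self (x : S) : seg x x = {x} := by
  ext z; simp only [mem_seg, mem_singleton_iff, dist_self]
  constructor
  · intro h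
    have h1 : 0 ≤ dist x z := dist_nonneg
    have h2 : 0 ≤ dist z x := dist_nonneg
    exact dist_eq_zero.1 (by linarith)
  · rintro rfl; simp

/-- z in [x,y], w in [x,z] -> w in [x,y] and z in [w,y] -/
theorem seg_trans {x y z w : S} (hz : z ∈ seg x y) (hw : w ∈ seg x z) : w ∈ seg x y ∧ z ∈ seg w y := by
  simp only [mem_seg] at *
  have t1 := dist_triangle x w y
  have t2 := dist_triangle w z y
  constructor <;> linarith

theorem seg_trans' {x y z w : S} (hz : z ∈ seg x y) (hw : w ∈ seg z y) : w ∈ seg x y ∧ z ∈ seg x w := by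
  obtain ⟨h1, h2⟩ := seg_trans (mem_symm hz) (mem_symm hw)
  exact ⟨mem_symm h1, mem_symm h2⟩

theorem seg_sub_left {x y z : S} (hz : z ∈ seg x y) : seg x z ⊆ seg x y := fun _ hw => (seg_trans hz hw).1
theorem seg_sub_right {x y z : S} (hz : z ∈ seg x y) : seg z y ⊆ seg x y := fun _ hw => (seg_trans' hz hw).1

variable [Bus S]

theorem seg_conv2 {x y x' y' z z' : S} {t : ℝ} (ht : 0 ≤ t) (ht1 : t ≤ 1) (hz : z ∈ seg x y)
    (hz' : z' ∈ seg x' y') (e : dist x z = t * dist x y) (e' : dist x' z' = t * dist x' y') :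
    dist z z' ≤ (1 - t) * dist x x' + t * dist y y' := by
  rw [mem_seg] at hz hz'
  exact Bus.conv x y x' y' z z' t ht ht1 e (by linarith) e' (by linarith)

theorem seg_uniq {x y z z' : S} (hz : z ∈ seg x y) (hz' : z' ∈ seg x y) (h : dist x z = dist x z') : z = z' := by
  by_cases hxy : dist x y = 0
  · have := dist_eq_zero.1 hxy; subst this
    rw [seg_self] at hz hz'; rw [hz, hz']
  have hp : 0 < dist x y := lt_of_le_of_ne dist_nonneg (Ne.symm hxy)
  have hle : dist x z ≤ dist x y := by rw [mem_seg] at hz; linarith [@dist_nonneg _ _ z y]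
  have := seg_conv2 (t := dist x z / dist x y) (by positivity) ((div_le_one hp).2 hle) hz hz' (by field_simp) (by rw [← h]; field_simp)
  simp only [dist_self, mul_zero, add_zero] at this
  exact dist_le_zero.1 this

theorem seg_order {x y z z' : S} (hz : z ∈ seg x y) (hz' : z' ∈ seg x y) (h : dist x z ≤ dist x z') :
    z ∈ seg x z' := by
  obtain ⟨w, hw, e⟩ := Bus.ex x z' (dist x z) dist_nonneg h
  have := seg_uniq (seg_trans hz' hw).1 hz e
  rwa [← this]

theorem seg_total {x y z z' : S} (hz : z ∈ seg x y) (hz' : z' ∈ seg x y) : 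
    (z ∈ seg x z' ∧ z' ∈ seg z y) ∨ (z' ∈ seg x z ∧ z ∈ seg z' y) := by
  rcases le_total (dist x z) (dist x z') with h | h
  · have := seg_order hz hz' h
    exact Or.inl ⟨this, (seg_trans hz' this).2⟩
  · have := seg_order hz' hz h
    exact Or.inr ⟨this, (seg_trans hz this).2⟩

theorem seg_split {x y z w : S} (hz : z ∈ seg x y) (hw : w ∈ seg x y) : w ∈ seg x z ∨ w ∈ seg z y := by
  rcases seg_total hz hw with h | h
  · exact Or.inr h.2
  · exact Or.inl h.1

theorem seg_sub {x y z w : S} (hz : z ∈ seg x y) (hw : w ∈ seg x y) : seg z w ⊆ seg x y := by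
  rcases seg_total hz hw with h | h
  · exact (seg_sub_right h.1).trans (seg_sub_left hw)
  · rw [seg_symm]; exact (seg_sub_right h.1).trans (seg_sub_left hz)

/-- convexity of distance to a point, unnormalised -/
theorem dist_conv {x y z : S} (p : S) (hz : z ∈ seg x y) :
    dist x y * dist p z ≤ dist z y * dist p x + dist x z * dist p y := by
  by_cases hxy : dist x y = 0
  · have := dist_eq_zero.1 hxy; subst this
    rw [seg_self] at hz; rw [hz]; simp
  have hp : 0 < dist x y := lt_of_le_of_ne dist_nonneg (Ne.symm hxy)
  have hz2 := mem_seg.1 hz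
  have hle : dist x z ≤ dist x y := by linarith [@dist_nonneg _ _ z y]
  have h := seg_conv2 (z' := p) (x' := p) (y' := p) (t := dist x z / dist x y) (by positivity) ((div_le_one hp).2 hle) hz (left_mem p p) (by field_simp) (by simp)
  rw [dist_comm p z, dist_comm p x, dist_comm p y]
  have e : dist z y = dist x y - dist x z := by linarith
  rw [e]
  calc dist x y * dist z p ≤ dist x y * ((1 - dist x z / dist x y) * dist x p + dist x z / dist x y * dist y p) := by gcongr
    _ = _ := by field_simp

/-- local-to-global concatenation -/
theorem concat {X Y q q' : S} (h1 : q ∈ seg X q') (h2 : q' ∈ seg q Y) (hne : q ≠ q') :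
    q ∈ seg X Y ∧ q' ∈ seg X Y := by
  have hq := mem_seg.1 h1
  have hq' := mem_seg.1 h2
  have a : 0 < dist q q' := dist_pos.2 hne
  -- convexity of distance from the point on [X,Y]
  have hX : 0 ≤ dist X q := dist_nonneg
  have hY : 0 ≤ dist q' Y := dist_nonneg
  set s := dist X q
  set r := dist q q'
  set u := dist q' Y
  -- point z on [X, Y] at ratio t
  have hb : 0 < r + u := by linarith
  have hXY : dist X Y ≤ s + r + u := by
    have := dist_triangle4 X q q' Y; linarith
  -- choose on [q', X]∼ and [q',Y]: use conv based at q
  suffices h : s + r + u ≤ dist X Y by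
    constructor
    · rw [mem_seg]; have := dist_triangle q q' Y; have := dist_triangle X q Y; linarith
    · rw [mem_seg]; linarith [dist_triangle X q q', dist_triangle X q' Y]
  have ht0 : 0 ≤ r / (s + r) := by positivity
  have ht1 : r / (s + r) ≤ 1 := (div_le_one (by linarith)).2 (by linarith)
  obtain ⟨b, hb, eb⟩ := Bus.ex q' Y (r / (s + r) * u) (by positivity) (by nlinarith)
  have hqb := mem_seg.1 (seg_trans' h2 hb).2
  have h := seg_conv2 (x := q') (x' := q') (y := X) (y' := Y) ht0 ht1 (mem_symm h1) hb
    (by rw [dist_comm q' q, dist_comm q' X, ← hq]; change r = _; field_simp) eb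
  simp only [dist_self, mul_zero, zero_add] at h
  rw [eb] at hqb
  rw [← hqb] at h
  change r + _ ≤ _ at h
  have hsr : 0 < s + r := by linarith
  have : r * (s + r + u) ≤ r * dist X Y := by
    have := mul_le_mul_of_nonneg_left h hsr.le
    field_simp at this
    nlinarith
  exact le_of_mul_le_mul_left this a

theorem geo_ex (x y : S) (t : ℝ) : ∃ z ∈ seg x y, dist x z = (max 0 (min t 1)) * dist x y := by
  apply Bus.ex
  · positivity
  · have : max 0 (min t 1) ≤ 1 := by simp
    nlinarith [@dist_nonneg _ _ x y]

/-- constant speed geodesic -/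
noncomputable def geo (x y : S) (t : ℝ) : S := (geo_ex x y t).choose
theorem geo_mem (x y : S) (t : ℝ) : geo x y t ∈ seg x y := (geo_ex x y t).choose_spec.1
theorem geo_dist (x y : S) (t : ℝ) : dist x (geo x y t) = (max 0 (min t 1)) * dist x y := (geo_ex x y t).choose_spec.2
theorem geo_zero (x y : S) : geo x y 0 = x := by
  have := geo_dist x y 0
  simp at this; exact this.symm
theorem geo_one (x y : S) : geo x y 1 = y := by
  have := geo_dist x y 1
  simp at this
  exact seg_uniq (geo_mem x y 1) (right_mem x y) this

theorem geo_surj {x y z : S} (h : z ∈ seg x y) : ∃ t ∈ Icc (0:ℝ) 1, geo x y t = z := by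
  by_cases hxy : dist x y = 0
  · have := dist_eq_zero.1 hxy; subst this
    rw [seg_self] at h; exact ⟨0, by simp, by rw [geo_zero]; exact h.symm⟩
  have hp : 0 < dist x y := lt_of_le_of_ne dist_nonneg (Ne.symm hxy)
  have hz2 := mem_seg.1 h
  have hle : dist x z ≤ dist x y := by linarith [@dist_nonneg _ _ z y]
  have h1 : dist x z / dist x y ≤ 1 := (div_le_one hp).2 hle
  have h0 : 0 ≤ dist x z / dist x y := by positivity
  refine ⟨dist x z / dist x y, ⟨h0, h1⟩, seg_uniq (geo_mem _ _ _) h ?_⟩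
  rw [geo_dist, min_eq_left h1, max_eq_right h0]; field_simp

theorem geo_same (x y : S) (s t : ℝ) : dist (geo x y s) (geo x y t) ≤ |s - t| * dist x y := by
  wlog h : s ≤ t generalizing s t
  · have := this t s (le_of_not_ge h)
    rwa [dist_comm, abs_sub_comm]
  have hm : max 0 (min s 1) ≤ max 0 (min t 1) := by gcongr
  have hd : dist x (geo x y s) ≤ dist x (geo x y t) := by
    rw [geo_dist, geo_dist]; gcongr
  have := mem_seg.1 (seg_order (geo_mem x y s) (geo_mem x y t) hd)
  have e : dist (geo x y s) (geo x y t) = (max 0 (min t 1) - max 0 (min s 1)) * dist x y := by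
    rw [geo_dist, geo_dist] at this; linarith
  rw [e, abs_sub_comm, abs_of_nonneg (by linarith)]
  refine mul_le_mul_of_nonneg_right ?_ dist_nonneg
  clear e this hd hm
  grind

theorem geo_cont (o : S) : Continuous (fun p : S × ℝ => geo o p.1 p.2) := by
  rw [continuous_iff_continuousAt]
  rintro ⟨y, t⟩
  rw [ContinuousAt, tendsto_iff_dist_tendsto_zero]
  have hb : ∀ p : S × ℝ, dist (geo o p.1 p.2) (geo o y t) ≤ dist p.1 y + |p.2 - t| * dist o y := by
    intro p
    have h1 : dist (geo o p.1 p.2) (geo o y p.2) ≤ dist p.1 y := by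
      have h1 : max 0 (min p.2 1) ≤ 1 := by simp
      have := seg_conv2 (t := max 0 (min p.2 1)) (by simp) (by simp) (geo_mem o p.1 p.2) (geo_mem o y p.2) (geo_dist _ _ _) (geo_dist _ _ _)
      simp only [dist_self, mul_zero, zero_add] at this
      nlinarith [@dist_nonneg _ _ p.1 y]
    exact (dist_triangle _ _ _).trans (add_le_add h1 (geo_same _ _ _ _))
  have hl : Filter.Tendsto (fun p : S × ℝ => dist p.1 y + |p.2 - t| * dist o y) (nhds (y, t)) (nhds 0) := by
    have : Continuous (fun p : S × ℝ => dist p.1 y + |p.2 - t| * dist o y) := by fun_prop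
    have := this.tendsto (y, t)
    simpa using this
  exact squeeze_zero (fun _ => dist_nonneg) hb hl

theorem geo_cont1 (o y : S) : Continuous (geo o y) := 
  (geo_cont o).comp (Continuous.prodMk continuous_const continuous_id)

theorem seg_eq_image (x y : S) : seg x y = geo x y '' Icc (0:ℝ) 1 := by
  ext z; constructor
  · intro h; obtain ⟨t, ht, e⟩ := geo_surj h; exact ⟨t, ht, e⟩
  · rintro ⟨t, -, rfl⟩; exact geo_mem _ _ _

theorem seg_compact (x y : S) : IsCompact (seg x y) := by
  rw [seg_eq_image]; exact isCompact_Icc.image (geo_cont1 x y)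

theorem seg_joined (x y : S) : JoinedIn (seg x y) x y :=
  JoinedIn.ofLine (f := geo x y) (geo_cont1 x y).continuousOn (geo_zero x y) (geo_one x y)
    (by rw [← seg_eq_image])

end
end BS

namespace BS

theorem exists_log (F : ℝ × ℝ → ℂ) (hF : Continuous F) (h0 : ∀ p, F p ≠ 0) :
    ∃ L : ℝ × ℝ → ℂ, Continuous L ∧ ∀ p, Complex.exp (L p) = F p := by
  let f : C(ℝ × ℝ, {z : ℂ // z ≠ 0}) := ⟨fun p => ⟨F p, h0 p⟩, by fun_prop⟩
  obtain ⟨L, ⟨-, h⟩, -⟩ := Complex.isCoveringMap_exp.existsUnique_continuousMap_lifts f (0, 0)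
    (Complex.log (F (0, 0))) (by simp [f, Complex.exp_log (h0 _)])
  refine ⟨L, L.continuous, fun p => ?_⟩
  have := congrFun h p
  simpa [f, Subtype.ext_iff] using this

theorem log_diff {f g : ℝ → ℂ} (hf : ContinuousOn f (Icc 0 1)) (hg : ContinuousOn g (Icc 0 1))
    (h : ∀ t ∈ Icc (0:ℝ) 1, Complex.exp (f t) = Complex.exp (g t)) : f 1 - f 0 = g 1 - g 0 := by
  have hint : ∀ t ∈ Icc (0:ℝ) 1, ∃ n : ℤ, f t = g t + n * (2 * Real.pi * Complex.I) := fun t ht =>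
    Complex.exp_eq_exp_iff_exists_int.1 (h t ht)
  have hint' : ∀ t ∈ Icc (0:ℝ) 1, ∃ n : ℤ, (f t - g t).im / (2 * Real.pi) = n := by
    intro t ht
    obtain ⟨n, hn⟩ := hint t ht
    refine ⟨n, ?_⟩
    rw [hn]
    simp
  have hc : ContinuousOn (fun t => (f t - g t).im / (2 * Real.pi)) (Icc 0 1) := by
    have := Complex.continuous_im.comp_continuousOn (hf.sub hg)
    exact this.div_const _
  have hconst := isPreconnected_Icc.constant_of_mapsTo (T := Set.range ((↑) : ℤ → ℝ))
    Int.isClosedEmbedding_coe_real.isEmbedding.isDiscrete_range hc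
    (fun t ht => by obtain ⟨n, hn⟩ := hint' t ht; exact ⟨n, hn.symm⟩)
    (show (0:ℝ) ∈ Icc (0:ℝ) 1 by simp) (show (1:ℝ) ∈ Icc (0:ℝ) 1 by simp)
  obtain ⟨n, hn⟩ := hint 0 (by simp)
  obtain ⟨m, hm⟩ := hint 1 (by simp)
  simp only [hn, hm] at hconst
  simp at hconst
  rw [hn, hm, hconst]; ring

theorem log_side {f u : ℝ → ℂ} {c : ℂ} (hc : c ≠ 0) (hf : ContinuousOn f (Icc 0 1))
    (hu : ContinuousOn u (Icc 0 1)) (hb : ∀ t, ‖u t‖ ≤ 1) (hne : ∀ t, u t ≠ 1)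
    (h : ∀ t, Complex.exp (f t) = c * (1 - u t)) :
    f 1 - f 0 = Complex.log (1 - u 1) - Complex.log (1 - u 0) := by
  have hsp : ∀ t, 1 - u t ∈ Complex.slitPlane := by
    intro t
    left
    simp only [Complex.sub_re, Complex.one_re]
    have h1 : (u t).re ≤ 1 := (Complex.re_le_norm _).trans (hb t)
    rcases h1.lt_or_eq with h2 | h2
    · linarith
    · exfalso
      apply hne t
      have h3 := Complex.sq_norm (u t)
      rw [Complex.normSq_apply, h2] at h3
      have h4 := hb t
      have h5 := norm_nonneg (u t)
      have : (u t).im = 0 := by nlinarith [sq_nonneg (u t).im]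
      exact Complex.ext (by simpa using h2) (by simpa using this)
  have := log_diff (f := f) (g := fun t => Complex.log c + Complex.log (1 - u t)) hf
    (continuousOn_const.add (ContinuousOn.clog (continuousOn_const.sub hu) (fun t _ => hsp t)))
    (fun t _ => by
      rw [h t, Complex.exp_add, Complex.exp_log hc, Complex.exp_log (Complex.slitPlane_ne_zero (hsp t))])
  rw [this]; ring

theorem one_sub_exp (δ : ℝ) : (1:ℂ) - Complex.exp (δ * Complex.I) =
    ((2 * Real.sin (δ / 2) : ℝ):ℂ) * Complex.exp (((δ - Real.pi) / 2 : ℝ) * Complex.I) := by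
  have e1 : Complex.exp (δ * Complex.I) = Complex.cos δ + Complex.sin δ * Complex.I := Complex.exp_mul_I _
  have e2 : Complex.exp (((δ - Real.pi) / 2 : ℝ) * Complex.I) = Complex.cos ((δ - Real.pi) / 2 : ℝ) + Complex.sin ((δ - Real.pi) / 2 : ℝ) * Complex.I := Complex.exp_mul_I _
  rw [e1, e2, ← Complex.ofReal_cos, ← Complex.ofReal_sin, ← Complex.ofReal_cos, ← Complex.ofReal_sin]
  have h1 : Real.cos ((δ - Real.pi) / 2) = Real.sin (δ / 2) := by
    rw [show (δ - Real.pi) / 2 = δ / 2 - Real.pi / 2 by ring, Real.cos_sub_pi_div_two]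
  have h2 : Real.sin ((δ - Real.pi) / 2) = - Real.cos (δ / 2) := by
    rw [show (δ - Real.pi) / 2 = δ / 2 - Real.pi / 2 by ring, Real.sin_sub_pi_div_two]
  rw [h1, h2]
  have h3 : Real.cos δ = 1 - 2 * Real.sin (δ / 2) ^ 2 := by
    have := Real.cos_two_mul (δ / 2)
    have h' := Real.sin_sq_add_cos_sq (δ / 2)
    rw [show 2 * (δ / 2) = δ by ring] at this
    linarith
  have h4 : Real.sin δ = 2 * Real.sin (δ / 2) * Real.cos (δ / 2) := by
    have := Real.sin_two_mul (δ / 2)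
    rwa [show 2 * (δ / 2) = δ by ring] at this
  rw [h3, h4]
  generalize Real.sin (δ / 2) = a
  generalize Real.cos (δ / 2) = b
  push_cast; ring

theorem im_log_pos {δ : ℝ} (h : 0 < δ) (h' : δ < 2 * Real.pi) :
    (Complex.log (1 - Complex.exp (δ * Complex.I))).im = (δ - Real.pi) / 2 := by
  have hs : 0 < Real.sin (δ / 2) := Real.sin_pos_of_pos_of_lt_pi (by linarith) (by linarith)
  rw [one_sub_exp, Complex.log_im, Complex.arg_real_mul _ (by positivity), ← Complex.log_im,
    Complex.log_exp]
  · simp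
  · simp; linarith [Real.pi_pos]
  · simp; linarith [Real.pi_pos]

theorem im_log_neg {δ : ℝ} (h : -(2 * Real.pi) < δ) (h' : δ < 0) :
    (Complex.log (1 - Complex.exp (δ * Complex.I))).im = (δ + Real.pi) / 2 := by
  have := im_log_pos (δ := δ + 2 * Real.pi) (by linarith) (by linarith)
  push_cast at this
  rw [add_mul, Complex.exp_add, Complex.exp_two_pi_mul_I, mul_one] at this
  rw [this]; ring

theorem crossing_core {R : ℝ} (hR : 0 < R) {α β : ℝ → ℂ} (hα : Continuous α) (hβ : Continuous β)
    (bα : ∀ t, ‖α t‖ ≤ R) (bβ : ∀ t, ‖β t‖ ≤ R) {θ1 θ2 θ3 θ4 : ℝ}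
    (h12 : θ1 < θ2) (h23 : θ2 < θ3) (h34 : θ3 < θ4) (h41 : θ4 < θ1 + 2 * Real.pi)
    (e1 : α 0 = R * Complex.exp (θ1 * Complex.I)) (e2 : β 0 = R * Complex.exp (θ2 * Complex.I))
    (e3 : α 1 = R * Complex.exp (θ3 * Complex.I)) (e4 : β 1 = R * Complex.exp (θ4 * Complex.I)) :
    ∃ s t, α s = β t := by
  by_contra! hne
  obtain ⟨L, hL, hLe⟩ := exists_log (fun p => α p.1 - β p.2) (by fun_prop)
    (fun p => sub_ne_zero.2 (hne p.1 p.2))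
  have hRc : (R : ℂ) ≠ 0 := by exact_mod_cast hR.ne'
  have nrm : ∀ θ : ℝ, ‖(R:ℂ) * Complex.exp (θ * Complex.I)‖ = R := by
    intro θ; rw [norm_mul, Complex.norm_exp_ofReal_mul_I]; simp [abs_of_pos hR]
  have nz : ∀ θ : ℝ, (R:ℂ) * Complex.exp (θ * Complex.I) ≠ 0 := fun θ =>
    mul_ne_zero hRc (Complex.exp_ne_zero _)
  have quo : ∀ θ θ' : ℝ, ((R:ℂ) * Complex.exp (θ * Complex.I)) / (R * Complex.exp (θ' * Complex.I))
      = Complex.exp (((θ - θ' : ℝ):ℂ) * Complex.I) := by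
    intro θ θ'
    rw [mul_div_mul_left _ _ hRc, ← Complex.exp_sub]; push_cast; ring_nf
  -- α-sides : t fixed
  have sideA : ∀ (τ θ : ℝ), β τ = R * Complex.exp (θ * Complex.I) →
      (L (1, τ) - L (0, τ)).im = (Complex.log (1 - Complex.exp (((θ3 - θ : ℝ):ℂ) * Complex.I))).im
        - (Complex.log (1 - Complex.exp (((θ1 - θ : ℝ):ℂ) * Complex.I))).im := by
    intro τ θ hb
    have hz : β τ ≠ 0 := by rw [hb]; exact nz θ
    have := log_side (f := fun s => L (s, τ)) (u := fun s => α s / β τ) (c := - β τ) (neg_ne_zero.2 hz)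
      (by fun_prop) (by fun_prop) (fun t => by
        rw [norm_div, hb, nrm]; exact (div_le_one hR).2 (bα t))
      (fun t => by rw [Ne, div_eq_one_iff_eq hz]; exact hne t τ)
      (fun t => by simp only [hLe]; field_simp; ring)
    rw [this, Complex.sub_im, e1, e3, hb, quo, quo]
  have sideB : ∀ (σ θ : ℝ), α σ = R * Complex.exp (θ * Complex.I) →
      (L (σ, 1) - L (σ, 0)).im = (Complex.log (1 - Complex.exp (((θ4 - θ : ℝ):ℂ) * Complex.I))).im
        - (Complex.log (1 - Complex.exp (((θ2 - θ : ℝ):ℂ) * Complex.I))).im := by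
    intro σ θ hb
    have hz : α σ ≠ 0 := by rw [hb]; exact nz θ
    have := log_side (f := fun s => L (σ, s)) (u := fun s => β s / α σ) (c := α σ) hz
      (by fun_prop) (by fun_prop) (fun t => by
        rw [norm_div, hb, nrm]; exact (div_le_one hR).2 (bβ t))
      (fun t => by rw [Ne, div_eq_one_iff_eq hz]; exact (hne σ t).symm)
      (fun t => by simp only [hLe]; field_simp)
    rw [this, Complex.sub_im, e2, e4, hb, quo, quo]
  have s1 := sideA 0 θ2 e2
  have s2 := sideA 1 θ4 e4
  have s3 := sideB 0 θ1 e1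
  have s4 := sideB 1 θ3 e3
  rw [im_log_pos (by linarith) (by linarith), im_log_neg (by linarith) (by linarith)] at s1
  rw [im_log_neg (by linarith) (by linarith), im_log_neg (by linarith) (by linarith)] at s2
  rw [im_log_pos (by linarith) (by linarith), im_log_pos (by linarith) (by linarith)] at s3
  rw [im_log_pos (by linarith) (by linarith), im_log_neg (by linarith) (by linarith)] at s4
  simp only [Complex.sub_im] at s1 s2 s3 s4
  linarith [Real.pi_pos]

variable {S : Type*} [MetricSpace S] (φ : S ≃ₜ ℂ)

/-- the closed disc -/
def Dsk (R : ℝ) : Set S := {s | ‖φ s‖ ≤ R}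

/-- angle of a point -/
noncomputable def ang (s : S) : ℝ := Complex.arg (φ s)

variable {φ}

theorem ang_inj {R : ℝ} {s t : S} (hs : ‖φ s‖ = R) (ht : ‖φ t‖ = R) (h : ang φ s = ang φ t) : s = t :=
  φ.injective (Complex.ext_norm_arg (hs.trans ht.symm) h)

theorem crossing {R : ℝ} (hR : 0 < R) {A B : Set S} (hA : A ⊆ Dsk φ R) (hB : B ⊆ Dsk φ R)
    {e1 e2 e3 e4 : S} (n1 : ‖φ e1‖ = R) (n2 : ‖φ e2‖ = R) (n3 : ‖φ e3‖ = R) (n4 : ‖φ e4‖ = R)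
    (h12 : ang φ e1 < ang φ e2) (h23 : ang φ e2 < ang φ e3) (h34 : ang φ e3 < ang φ e4)
    (jA : JoinedIn A e1 e3) (jB : JoinedIn B e2 e4) : (A ∩ B).Nonempty := by
  have key : ∀ e : S, ‖φ e‖ = R → φ e = R * Complex.exp (ang φ e * Complex.I) := by
    intro e he
    rw [← he, ang, Complex.norm_mul_exp_arg_mul_I]
  obtain ⟨γ, hγ⟩ := jA
  obtain ⟨γ', hγ'⟩ := jB
  have m1 : ∀ t, γ.extend t ∈ A := fun t => by
    have : γ.extend t ∈ range γ := by rw [← Path.extend_range]; exact mem_range_self t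
    obtain ⟨u, hu⟩ := this; rw [← hu]; exact hγ u
  have m2 : ∀ t, γ'.extend t ∈ B := fun t => by
    have : γ'.extend t ∈ range γ' := by rw [← Path.extend_range]; exact mem_range_self t
    obtain ⟨u, hu⟩ := this; rw [← hu]; exact hγ' u
  obtain ⟨s, t, h⟩ := crossing_core hR (α := fun t => φ (γ.extend t)) (β := fun t => φ (γ'.extend t))
    (by fun_prop) (by fun_prop) (fun t => hA (m1 t)) (fun t => hB (m2 t)) h12 h23 h34
    (by have h1 := Complex.arg_le_pi (φ e4); have h2 := Complex.neg_pi_lt_arg (φ e1); unfold ang; linarith)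
    (by simp [key e1 n1]) (by simp [key e2 n2]) (by simp [key e3 n3]) (by simp [key e4 n4])
  refine ⟨γ.extend s, m1 s, ?_⟩
  rw [φ.injective h]; exact m2 t

theorem crossing3 {R : ℝ} (hR : 0 < R) {e1 e2 e3 e4 : S}
    (n1 : ‖φ e1‖ = R) (n2 : ‖φ e2‖ = R) (n3 : ‖φ e3‖ = R) (n4 : ‖φ e4‖ = R)
    (d12 : e1 ≠ e2) (d13 : e1 ≠ e3) (d14 : e1 ≠ e4) (d23 : e2 ≠ e3) (d24 : e2 ≠ e4) (d34 : e3 ≠ e4)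
    {A12 A34 A13 A24 A14 A23 : Set S} 
    (s12 : A12 ⊆ Dsk φ R) (s34 : A34 ⊆ Dsk φ R) (s13 : A13 ⊆ Dsk φ R) (s24 : A24 ⊆ Dsk φ R)
    (s14 : A14 ⊆ Dsk φ R) (s23 : A23 ⊆ Dsk φ R)
    (j12 : JoinedIn A12 e1 e2) (j34 : JoinedIn A34 e3 e4) (j13 : JoinedIn A13 e1 e3)
    (j24 : JoinedIn A24 e2 e4) (j14 : JoinedIn A14 e1 e4) (j23 : JoinedIn A23 e2 e3) :
    (A12 ∩ A34).Nonempty ∨ (A13 ∩ A24).Nonempty ∨ (A14 ∩ A23).Nonempty := by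
  have a12 : ang φ e1 ≠ ang φ e2 := fun h => d12 (ang_inj n1 n2 h)
  have a13 : ang φ e1 ≠ ang φ e3 := fun h => d13 (ang_inj n1 n3 h)
  have a14 : ang φ e1 ≠ ang φ e4 := fun h => d14 (ang_inj n1 n4 h)
  have a23 : ang φ e2 ≠ ang φ e3 := fun h => d23 (ang_inj n2 n3 h)
  have a24 : ang φ e2 ≠ ang φ e4 := fun h => d24 (ang_inj n2 n4 h)
  have a34 : ang φ e3 ≠ ang φ e4 := fun h => d34 (ang_inj n3 n4 h)
  -- general crossing with unordered pairs
  have gen : ∀ {A B : Set S} {a a' b b' : S}, A ⊆ Dsk φ R → B ⊆ Dsk φ R → JoinedIn A a a' →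
      JoinedIn B b b' → ‖φ a‖ = R → ‖φ a'‖ = R → ‖φ b‖ = R → ‖φ b'‖ = R → 
      ang φ a < ang φ a' → 
      ((ang φ a < ang φ b ∧ ang φ b < ang φ a' ∧ (ang φ b' < ang φ a ∨ ang φ a' < ang φ b')) ∨
       (ang φ a < ang φ b' ∧ ang φ b' < ang φ a' ∧ (ang φ b < ang φ a ∨ ang φ a' < ang φ b))) →
      (A ∩ B).Nonempty := by
    intro A B a a' b b' sA sB jA jB na na' nb nb' haa' h
    rcases h with ⟨h1, h2, h3 | h3⟩ | ⟨h1, h2, h3 | h3⟩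
    · rw [inter_comm]; exact crossing hR sB sA nb' na nb na' h3 h1 h2 jB.symm jA
    · exact crossing hR sA sB na nb na' nb' h1 h2 h3 jA jB
    · rw [inter_comm]; exact crossing hR sB sA nb na nb' na' h3 h1 h2 jB jA
    · exact crossing hR sA sB na nb' na' nb h1 h2 h3 jA jB.symm
  have gen2 : ∀ {A B : Set S} {a a' b b' : S}, A ⊆ Dsk φ R → B ⊆ Dsk φ R → JoinedIn A a a' →
      JoinedIn B b b' → ‖φ a‖ = R → ‖φ a'‖ = R → ‖φ b‖ = R → ‖φ b'‖ = R → 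
      ((ang φ a < ang φ b ∧ ang φ b < ang φ a' ∧ (ang φ b' < ang φ a ∨ ang φ a' < ang φ b')) ∨
       (ang φ a < ang φ b' ∧ ang φ b' < ang φ a' ∧ (ang φ b < ang φ a ∨ ang φ a' < ang φ b)) ∨
       (ang φ a' < ang φ b ∧ ang φ b < ang φ a ∧ (ang φ b' < ang φ a' ∨ ang φ a < ang φ b')) ∨
       (ang φ a' < ang φ b' ∧ ang φ b' < ang φ a ∧ (ang φ b < ang φ a' ∨ ang φ a < ang φ b))) →
      (A ∩ B).Nonempty := by
    intro A B a a' b b' sA sB jA jB na na' nb nb' h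
    rcases h with h | h | h | h
    · exact gen sA sB jA jB na na' nb nb' (h.1.trans h.2.1) (Or.inl h)
    · exact gen sA sB jA jB na na' nb nb' (h.1.trans h.2.1) (Or.inr h)
    · exact gen sA sB jA.symm jB na' na nb nb' (h.1.trans h.2.1) (Or.inl h)
    · exact gen sA sB jA.symm jB na' na nb nb' (h.1.trans h.2.1) (Or.inr h)
  by_contra! hcon
  have c1 := mt (gen2 s12 s34 j12 j34 n1 n2 n3 n4) (not_nonempty_iff_eq_empty.2 hcon.1)
  have c2 := mt (gen2 s13 s24 j13 j24 n1 n3 n2 n4) (not_nonempty_iff_eq_empty.2 hcon.2.1)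
  have c3 := mt (gen2 s14 s23 j14 j23 n1 n4 n2 n3) (not_nonempty_iff_eq_empty.2 hcon.2.2)
  clear hcon gen gen2
  generalize ang φ e1 = w at *
  generalize ang φ e2 = x at *
  generalize ang φ e3 = y at *
  generalize ang φ e4 = z at *
  rcases a12.lt_or_gt with h1 | h1 <;> rcases a13.lt_or_gt with h2 | h2 <;> rcases a14.lt_or_gt with h3 | h3 <;>
  rcases a23.lt_or_gt with h4 | h4 <;> rcases a24.lt_or_gt with h5 | h5 <;> rcases a34.lt_or_gt with h6 | h6 <;>
  first | linarith | simp [h1, h2, h3, h4, h5, h6] at c1 c2 c3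
  
end BS

namespace BS
section
variable {S : Type*} [MetricSpace S] [Bus S] {φ : S ≃ₜ ℂ}

theorem extend1 (φ : S ≃ₜ ℂ) {o x : S} (hox : o ≠ x) : ∃ y, y ≠ x ∧ x ∈ seg o y := by
  by_contra! hcon
  let c : ℝ → S := fun θ => φ.symm (φ x + Complex.exp (θ * Complex.I))
  have hc : Continuous c := by fun_prop
  have hcx : ∀ θ, c θ ≠ x := by
    intro θ h
    have : φ (c θ) = φ x := by rw [h]
    simp [c] at this
  have hH : Continuous (fun p : ℝ × ℝ => φ (geo o (c p.1) p.2) - φ x) := by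
    have : Continuous (fun p : ℝ × ℝ => geo o (c p.1) p.2) := 
      (geo_cont o).comp ((hc.comp continuous_fst).prodMk continuous_snd)
    fun_prop
  obtain ⟨L, hL, hLe⟩ := exists_log _ hH (fun p => by
    rw [sub_ne_zero, Ne, φ.injective.eq_iff]
    intro h
    exact hcon _ (hcx p.1) (h ▸ geo_mem _ _ _))
  have hcp : c (2 * Real.pi) = c 0 := by
    simp [c, Complex.exp_two_pi_mul_I]
  have e1 := log_diff (f := fun t => L (2 * Real.pi, t)) (g := fun t => L (0, t)) (by fun_prop) (by fun_prop)
    (fun t _ => by simp only [hLe, hcp])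
  have e2 := log_diff (f := fun s => L (s * (2 * Real.pi), 0)) (g := fun s => L (0, 0)) (by fun_prop) (by fun_prop)
    (fun t _ => by simp only [hLe, geo_zero])
  have e3 := log_diff (f := fun s => L (s * (2 * Real.pi), 1)) (g := fun s => (s * (2 * Real.pi) : ℝ) * Complex.I) (by fun_prop) (by fun_prop)
    (fun t _ => by simp only [hLe, geo_one, c]; simp)
  simp at e1 e2 e3
  have : (2 * (Real.pi:ℂ) * Complex.I) = 0 := by rw [← e3]; linear_combination e1 + e2
  exact Complex.two_pi_I_ne_zero this

theorem dsk_compact (φ : S ≃ₜ ℂ) (R : ℝ) : IsCompact (Dsk φ R) := by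
  have : Dsk φ R = φ ⁻¹' (closedBall 0 R) := by ext; simp [Dsk]
  rw [this]
  exact φ.isCompact_preimage.2 (isCompact_closedBall 0 R)

theorem dsk_nhds {R : ℝ} {x : S} (hx : ‖φ x‖ < R) : Dsk φ R ∈ nhds x := by
  have ho : IsOpen {s : S | ‖φ s‖ < R} := isOpen_lt (by fun_prop) continuous_const
  exact Filter.mem_of_superset (ho.mem_nhds hx) (fun s (hs : ‖φ s‖ < R) => hs.le)

theorem exists_dsk (φ : S ≃ₜ ℂ) {K : Set S} (hK : IsCompact K) : ∃ R, 0 < R ∧ ∀ x ∈ K, ‖φ x‖ < R := by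
  obtain ⟨C, hC⟩ := hK.exists_bound_of_continuousOn (f := φ) φ.continuous.continuousOn
  refine ⟨max C 0 + 1, by positivity, fun x hx => ?_⟩
  have := hC x hx
  have := le_max_left C 0
  linarith

/-- if `x` on `[o,y]` with `x ≠ y`, extend `[o, x]` further -/
theorem mem_closed (o : S) : IsClosed {p : S × S | p.1 ∈ seg o p.2} := by
  simp only [mem_seg]
  exact isClosed_eq (by fun_prop) (by fun_prop)

theorem near_seg {x y z : S} {ε : ℝ} (hz : z ∈ seg x y) (h : dist x y < ε) : dist z x < ε := by
  rw [mem_seg] at hz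
  rw [dist_comm]; linarith [@dist_nonneg _ _ z y]

/-- geodesics can be extended to the boundary of the disc -/
theorem extendD {R : ℝ} {o x : S} (hox : o ≠ x) (hx : ‖φ x‖ ≤ R) : 
    ∃ e, ‖φ e‖ = R ∧ x ∈ seg o e ∧ seg x e ⊆ Dsk φ R := by
  let Y : Set S := {y | x ∈ seg o y ∧ seg x y ⊆ Dsk φ R}
  have hYD : Y ⊆ Dsk φ R := fun y hy => hy.2 (right_mem x y)
  have hYc : IsClosed Y := by
    have h1 : IsClosed {y : S | x ∈ seg o y} := by
      simp only [mem_seg]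
      exact isClosed_eq (by fun_prop) (by fun_prop)
    have h2 : {y : S | seg x y ⊆ Dsk φ R} = ⋂ t : ℝ, {y | ‖φ (geo x y t)‖ ≤ R} := by
      ext y; simp only [mem_ofPred_eq, mem_iInter]
      constructor
      · intro h t; exact h (geo_mem x y t)
      · intro h z hz
        obtain ⟨t, -, rfl⟩ := geo_surj hz
        exact h t
    have h3 : IsClosed {y : S | seg x y ⊆ Dsk φ R} := by
      rw [h2]
      refine isClosed_iInter fun t => isClosed_le ?_ continuous_const
      have : Continuous (fun y => geo x y t) := (geo_cont x).comp (continuous_id.prodMk continuous_const)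
      fun_prop
    exact h1.inter h3
  have hYk : IsCompact Y := (dsk_compact φ R).of_isClosed_subset hYc hYD
  have hxY : x ∈ Y := ⟨right_mem _ _, by rw [seg_self]; intro z hz; rw [hz]; exact hx⟩
  obtain ⟨e, heY, hmax⟩ := hYk.exists_isMaxOn ⟨x, hxY⟩ (f := fun y => dist o y) (by fun_prop)
  refine ⟨e, ?_, heY.1, heY.2⟩
  by_contra hne
  have hlt : ‖φ e‖ < R := lt_of_le_of_ne (hYD heY) hne
  have hoe : o ≠ e := by
    rintro rfl
    have := heY.1
    rw [seg_self] at this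
    exact hox this.symm
  obtain ⟨y, hye, hy⟩ := extend1 φ hoe
  obtain ⟨ε, hε, hball⟩ := Metric.mem_nhds_iff.1 (dsk_nhds (φ := φ) hlt)
  have hpos : 0 < dist e y := dist_pos.2 hye.symm
  obtain ⟨w, hw, hwd⟩ := Bus.ex e y (min (ε/2) (dist e y)) (by positivity) (min_le_right _ _)
  have hwlt : dist e w < ε := by rw [hwd]; have := min_le_left (ε/2) (dist e y); linarith
  have hwpos : 0 < dist e w := by rw [hwd]; positivity
  have h1 := (seg_trans' hy hw).2
  have hxw := seg_trans h1 heY.1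
  have hwY : w ∈ Y := by
    refine ⟨hxw.1, ?_⟩
    intro z hz
    rcases seg_split hxw.2 hz with h | h
    · exact heY.2 h
    · exact hball (near_seg h hwlt)
  have := hmax hwY
  simp only [mem_ofPred_eq] at this
  have := mem_seg.1 h1
  linarith

end
end BS

namespace BS
section
variable {S : Type*} [MetricSpace S] [Bus S] {φ : S ≃ₜ ℂ}

/-- join of a point and a set -/
def Jn (a : S) (C : Set S) : Set S := {v | ∃ g ∈ C, v ∈ seg a g}

theorem jn_compact (a : S) {C : Set S} (hC : IsCompact C) : IsCompact (Jn a C) := by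
  have : Jn a C = (fun p : S × ℝ => geo a p.1 p.2) '' (C ×ˢ Icc (0:ℝ) 1) := by
    ext v; constructor
    · rintro ⟨g, hg, hv⟩
      obtain ⟨t, ht, rfl⟩ := geo_surj hv
      exact ⟨(g, t), ⟨hg, ht⟩, rfl⟩
    · rintro ⟨⟨g, t⟩, ⟨hg, ht⟩, rfl⟩
      exact ⟨g, hg, geo_mem _ _ _⟩
  rw [this]
  exact (hC.prod isCompact_Icc).image (geo_cont a)

theorem rho_fact {a u eu ev z : S} (hu : u ∈ seg a eu) (hz : z ∈ seg u eu) (hz' : z ∈ seg a ev) :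
    u ∈ seg a ev := seg_sub_left hz' (seg_trans' hu hz).2

theorem seg_near {a x y : S} {U : Set S} {δ : ℝ} (hU : thickening δ (seg a x) ⊆ U) (h : dist x y < δ) :
    seg a y ⊆ U := by
  intro z hz
  obtain ⟨t, ht, rfl⟩ := geo_surj hz
  apply hU
  rw [mem_thickening_iff]
  refine ⟨geo a x t, geo_mem _ _ _, ?_⟩
  have := seg_conv2 (t := max 0 (min t 1)) (by simp) (by simp) (geo_mem a y t) (geo_mem a x t) (geo_dist _ _ _) (geo_dist _ _ _)
  simp only [dist_self, mul_zero, zero_add] at this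
  have h1 : max 0 (min t 1) ≤ 1 := by simp
  rw [dist_comm] at h
  nlinarith [@dist_nonneg _ _ y x]

theorem tri_nhds (φ : S ≃ₜ ℂ) {a b c x : S} (hx : x ∈ Jn a (seg b c)) (hxb : x ∉ seg a b) (hxc : x ∉ seg a c)
    (hxbc : x ∉ seg b c) : Jn a (seg b c) ∈ nhds x := by
  obtain ⟨g, hg, hxg⟩ := id hx
  have hJc := jn_compact a (seg_compact b c)
  obtain ⟨R, hR, hJR⟩ := exists_dsk φ hJc
  have hJD : Jn a (seg b c) ⊆ Dsk φ R := fun z hz => (hJR z hz).le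
  have hsubJ : ∀ u ∈ seg b c, seg a u ⊆ Jn a (seg b c) := fun u hu z hz => ⟨u, hu, hz⟩
  have hbJ : ∀ u ∈ seg b c, u ∈ Jn a (seg b c) := fun u hu => ⟨u, hu, right_mem _ _⟩
  have hbb := left_mem b c
  have hcc := right_mem b c
  have hxa : x ≠ a := by rintro rfl; exact hxb (left_mem _ _)
  have hab : a ≠ b := by rintro rfl; exact hxc (seg_sub_left hg hxg)
  have hac : a ≠ c := by rintro rfl; exact hxb (seg_sub_left (mem_symm hg) hxg)
  have hag : a ≠ g := by rintro rfl; rw [seg_self] at hxg; exact hxa hxg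
  have ray : ∀ u ∈ seg b c, a ≠ u → ∃ e, ‖φ e‖ = R ∧ u ∈ seg a e ∧ seg u e ⊆ Dsk φ R ∧ seg a e ⊆ Dsk φ R := by
    intro u hu hau
    obtain ⟨e, h1, h2, h3⟩ := extendD (φ := φ) hau (hJD (hbJ u hu))
    refine ⟨e, h1, h2, h3, fun z hz => ?_⟩
    rcases seg_split h2 hz with h | h
    · exact hJD (hsubJ u hu h)
    · exact h3 h
  obtain ⟨eb, nb, beb, sb, rb⟩ := ray b hbb hab
  obtain ⟨ec, nc, cec, sc, rc⟩ := ray c hcc hac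
  obtain ⟨eg, ng, geg, sg, rg⟩ := ray g hg hag
  have xRb : x ∉ seg a eb := by
    intro h
    rcases seg_split beb h with h | h
    · exact hxb h
    · have h1 := (seg_trans' beb h).2
      have h2 := (seg_trans hxg h1).2
      exact hxbc (seg_sub hbb hg h2)
  have xRc : x ∉ seg a ec := by
    intro h
    rcases seg_split cec h with h | h
    · exact hxc h
    · have h1 := (seg_trans' cec h).2
      have h2 := (seg_trans hxg h1).2
      exact hxbc (seg_sub hcc hg h2)
  have gRb : g ∉ seg a eb := fun h => xRb (seg_sub_left h hxg)
  have gRc : g ∉ seg a ec := fun h => xRc (seg_sub_left h hxg)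
  have bRc : b ∉ seg a ec := fun h => gRc (seg_sub h cec hg)
  have cRb : c ∉ seg a eb := fun h => gRb (seg_sub beb h hg)
  have hxeg : x ∈ seg a eg := seg_sub_left geg hxg
  -- neighbourhoods
  have hU : IsOpen ({s : S | ‖φ s‖ < R} ∩ (seg b c)ᶜ) := 
    (isOpen_lt (by fun_prop) continuous_const).inter (seg_compact b c).isClosed.isOpen_compl
  have hsubU : seg a x ⊆ {s : S | ‖φ s‖ < R} ∩ (seg b c)ᶜ := by
    intro z hz
    refine ⟨hJR z (hsubJ g hg (seg_sub_left hxg hz)), fun hzz => ?_⟩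
    exact hxbc (seg_sub hzz hg (seg_trans hxg hz).2)
  obtain ⟨δ, hδ, hδU⟩ := (seg_compact a x).exists_thickening_subset_open hU hsubU
  have hV : IsOpen ((seg a eb)ᶜ ∩ (seg a ec)ᶜ) := 
    (seg_compact a eb).isClosed.isOpen_compl.inter (seg_compact a ec).isClosed.isOpen_compl
  obtain ⟨ε, hε, hεV⟩ := Metric.isOpen_iff.1 hV x ⟨xRb, xRc⟩
  refine Metric.mem_nhds_iff.2 ⟨min δ ε, by positivity, fun y hy => ?_⟩
  rw [mem_ball, dist_comm] at hy
  have hyδ : dist x y < δ := hy.trans_le (min_le_left _ _)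
  have hyε : dist x y < ε := hy.trans_le (min_le_right _ _)
  have hay := seg_near hδU hyδ
  have hxy : ∀ z ∈ seg x y, z ∉ seg a eb ∧ z ∉ seg a ec := fun z hz => hεV (near_seg hz hyε)
  have hxyD : seg x y ⊆ Dsk φ R := by
    intro z hz
    have h0 : dist x z < δ := by rw [mem_seg] at hz; linarith [@dist_nonneg _ _ z y]
    exact le_of_lt (show ‖φ z‖ < R from (seg_near hδU h0 (right_mem a z)).1)
  have hya : a ≠ y := by rintro rfl; exact (hxy a (right_mem _ _)).1 (left_mem _ _)
  obtain ⟨ey, ny, yey, sy⟩ := extendD (φ := φ) hya (hay (right_mem a y)).1.le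
  have ry : seg a ey ⊆ Dsk φ R := by
    intro z hz
    rcases seg_split yey hz with h | h
    · exact le_of_lt (show ‖φ z‖ < R from (hay h).1)
    · exact sy h
  by_cases hmeet : ∃ e ∈ seg a ey, e ∈ seg b c
  · obtain ⟨e, he, hebc⟩ := hmeet
    rcases seg_split yey he with h | h
    · exact absurd hebc (hay h).2
    · exact ⟨e, hebc, (seg_trans' yey h).2⟩
  exfalso
  have hmeet : ∀ e ∈ seg a ey, e ∉ seg b c := fun e h1 h2 => hmeet ⟨e, h1, h2⟩
  have d12 : eb ≠ ec := by rintro rfl; exact bRc beb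
  have d13 : eb ≠ eg := by rintro rfl; exact gRb geg
  have d23 : ec ≠ eg := by rintro rfl; exact gRc geg
  have d14 : eb ≠ ey := by rintro rfl; exact hmeet b beb hbb
  have d24 : ec ≠ ey := by rintro rfl; exact hmeet c cec hcc
  have d34 : eg ≠ ey := by rintro rfl; exact hmeet g geg hg
  have hbcD : seg b c ⊆ Dsk φ R := fun z hz => hJD (hbJ z hz)
  have J2 : ∀ u v w : S, JoinedIn (seg w u ∪ seg w v) u v := fun u v w =>
    ((seg_joined w u).symm.mono subset_union_left).trans ((seg_joined w v).mono subset_union_right)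
  have J3 : ∀ u v w z : S, JoinedIn (seg v u ∪ seg v w ∪ seg w z) u z := fun u v w z =>
    ((J2 u w v).mono subset_union_left).trans ((seg_joined w z).mono subset_union_right)
  rcases crossing3 hR nb nc ng ny d12 d13 d14 d23 d24 d34 
    (A12 := seg a eb ∪ seg a ec) (A34 := seg x eg ∪ seg x y ∪ seg y ey)
    (A13 := seg b eb ∪ seg b g ∪ seg g eg) (A24 := seg a ec ∪ seg a ey)
    (A14 := seg a eb ∪ seg a ey) (A23 := seg c ec ∪ seg c g ∪ seg g eg)
    (union_subset rb rc) (union_subset (union_subset ((seg_sub_right hxeg).trans rg) hxyD) sy)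
    (union_subset (union_subset sb ((seg_sub_left hg).trans hbcD)) sg) (union_subset rc ry)
    (union_subset rb ry) (union_subset (union_subset sc ((seg_sub hcc hg).trans hbcD)) sg)
    (J2 _ _ _) (J3 _ _ _ _) (J3 _ _ _ _) (J2 _ _ _) (J2 _ _ _) (J3 _ _ _ _) with h | h | h
  · obtain ⟨z, h1, (h2 | h2) | h2⟩ := h
    · rcases h1 with h1 | h1
      · exact xRb (rho_fact hxeg h2 h1)
      · exact xRc (rho_fact hxeg h2 h1)
    · rcases h1 with h1 | h1
      · exact (hxy z h2).1 h1
      · exact (hxy z h2).2 h1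
    · rcases h1 with h1 | h1
      · exact (hxy y (right_mem _ _)).1 (rho_fact yey h2 h1)
      · exact (hxy y (right_mem _ _)).2 (rho_fact yey h2 h1)
  · obtain ⟨z, (h2 | h2) | h2, h1⟩ := h
    · rcases h1 with h1 | h1
      · exact bRc (rho_fact beb h2 h1)
      · exact hmeet b (rho_fact beb h2 h1) hbb
    · rcases h1 with h1 | h1
      · exact gRc (seg_sub h1 cec (seg_trans hg h2).2)
      · exact hmeet z h1 (seg_sub_left hg h2)
    · rcases h1 with h1 | h1
      · exact gRc (rho_fact geg h2 h1)
      · exact hmeet g (rho_fact geg h2 h1) hg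
  · obtain ⟨z, h1, (h2 | h2) | h2⟩ := h
    · rcases h1 with h1 | h1
      · exact cRb (rho_fact cec h2 h1)
      · exact hmeet c (rho_fact cec h2 h1) hcc
    · rcases h1 with h1 | h1
      · exact gRb (seg_sub h1 beb (seg_trans (mem_symm hg) h2).2)
      · exact hmeet z h1 (seg_sub hcc hg h2)
    · rcases h1 with h1 | h1
      · exact gRb (rho_fact geg h2 h1)
      · exact hmeet g (rho_fact geg h2 h1) hg

/-- points slightly beyond -/
theorem step_in {z e : S} (hne : z ≠ e) {U : Set S} (hU : U ∈ nhds z) : ∃ w ∈ seg z e, w ≠ z ∧ w ∈ U := by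
  obtain ⟨ε, hε, hb⟩ := Metric.mem_nhds_iff.1 hU
  have hp : 0 < dist z e := dist_pos.2 hne
  obtain ⟨w, hw, hwd⟩ := Bus.ex z e (min (ε/2) (dist z e)) (by positivity) (min_le_right _ _)
  refine ⟨w, hw, ?_, hb ?_⟩
  · have : 0 < dist z w := by rw [hwd]; positivity
    exact (dist_pos.1 this).symm
  · rw [mem_ball, dist_comm, hwd]; have := min_le_left (ε/2) (dist z e); linarith

theorem peano (φ : S ≃ₜ ℂ) {a b c g v : S} (hg : g ∈ seg b c) (hv : v ∈ seg a g) :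
    ∃ h ∈ seg a c, v ∈ seg b h := by
  by_cases c1 : v ∈ seg a b
  · exact ⟨a, left_mem _ _, mem_symm c1⟩
  by_cases c2 : v ∈ seg a c
  · exact ⟨v, c2, right_mem _ _⟩
  by_cases c3 : v ∈ seg b c
  · exact ⟨c, right_mem _ _, c3⟩
  have hbv : b ≠ v := by rintro rfl; exact c3 (left_mem _ _)
  have hJc := jn_compact a (seg_compact b c)
  obtain ⟨R, hR, hJR⟩ := exists_dsk φ hJc
  have hvJ : v ∈ Jn a (seg b c) := ⟨g, hg, hv⟩
  obtain ⟨e, ne, hve, -⟩ := extendD (φ := φ) hbv (hJR v hvJ).le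
  have heJ : e ∉ Jn a (seg b c) := fun h => (hJR e h).ne ne
  obtain ⟨z, ⟨hzJ, hzs⟩, hmax⟩ := (hJc.inter (seg_compact v e)).exists_isMaxOn ⟨v, hvJ, left_mem _ _⟩ 
    (f := fun y => dist v y) (by fun_prop)
  have hze : z ≠ e := by rintro rfl; exact heJ hzJ
  have hvz : v ∈ seg b z := (seg_trans' hve hzs).2
  by_cases d1 : z ∈ seg a b
  · exact absurd (seg_sub (right_mem a b) d1 hvz) c1
  by_cases d3 : z ∈ seg b c
  · exact absurd (seg_sub_left d3 hvz) c3
  by_cases d2 : z ∈ seg a c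
  · exact ⟨z, d2, hvz⟩
  exfalso
  obtain ⟨w, hw, hwz, hwJ⟩ := step_in hze (tri_nhds φ hzJ d1 d2 d3)
  have h1 := seg_trans' hzs hw
  have h2 := hmax ⟨hwJ, h1.1⟩
  simp only [mem_ofPred_eq] at h2
  have h3 := mem_seg.1 h1.2
  have : 0 < dist z w := dist_pos.2 hwz.symm
  linarith

/-- geodesically convex -/
def Cvx (K : Set S) : Prop := ∀ x ∈ K, ∀ y ∈ K, seg x y ⊆ K

theorem jn_cvx (φ : S ≃ₜ ℂ) (z : S) {C : Set S} (hC : Cvx C) : Cvx (Jn z C) := by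
  rintro x ⟨c1, h1, hx⟩ y ⟨c2, h2, hy⟩ v hv
  obtain ⟨h, hh, hvh⟩ := peano φ hy hv
  obtain ⟨h', hh', hvh'⟩ := peano φ hx (mem_symm hh)
  exact ⟨h', hC c2 h2 c1 h1 hh', seg_sub_left hvh' hvh⟩

theorem exists_hull (φ : S ≃ₜ ℂ) (o : S) {Q : Set S} (hQ : Q.Finite) : 
    ∃ K : Set S, IsCompact K ∧ Cvx K ∧ o ∈ K ∧ Q ⊆ K := by
  induction Q, hQ using Set.Finite.induction_on with
  | empty => 
    refine ⟨{o}, isCompact_singleton, ?_, rfl, empty_subset _⟩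
    intro x hx y hy
    rw [mem_singleton_iff] at hx hy
    rw [hx, hy, seg_self]
  | @insert z Q _ _ ih =>
    obtain ⟨K, h1, h2, h3, h4⟩ := ih
    refine ⟨Jn z K, jn_compact z h1, jn_cvx φ z h2, ⟨o, h3, right_mem _ _⟩, ?_⟩
    rintro q (rfl | hq)
    · exact ⟨o, h3, left_mem _ _⟩
    · exact ⟨q, h4 hq, right_mem _ _⟩
end
end BS

namespace BS
section
variable {S : Type*} [MetricSpace S] [Bus S] {φ : S ≃ₜ ℂ}

theorem exists_rays (φ : S ≃ₜ ℂ) {ι : Type*} [Finite ι] (q0 : S) {Q : Set S} (hQ : Q.Finite) (o v : ι → S)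
    (hov : ∀ k, o k ≠ v k) :
    ∃ (K : Set S) (R : ℝ) (X E : ι → S), 0 < R ∧ Cvx K ∧ Q ⊆ K ∧ K ⊆ Dsk φ R ∧ 
      (∀ k, X k ∈ K) ∧ (∀ k, ‖φ (E k)‖ = R) ∧ (∀ k, seg (X k) (E k) ⊆ Dsk φ R) ∧ 
      (∀ k, ∀ z ∈ seg (X k) (E k), z ∈ K → z = X k) ∧
      (∀ k l, (seg (X k) (E k) ∩ seg (X l) (E l)).Nonempty → X k = X l) ∧
      (∀ k, v k ∈ seg (o k) (X k)) := by
  classical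
  let I : (ι → S) → Set (ι × ι) := fun E => {p | (seg (v p.1) (E p.1) ∩ seg (v p.2) (E p.2)).Nonempty}
  let V : Set (ι → S) := {E | ∀ k, v k ∈ seg (o k) (E k)}
  obtain ⟨E, hEV, hEmax⟩ : ∃ E ∈ V, ∀ E' ∈ V, (I E').ncard ≤ (I E).ncard := by
    have hne : ((fun E => (I E).ncard) '' V).Nonempty := ⟨_, v, fun k => right_mem _ _, rfl⟩
    have hbd : BddAbove ((fun E => (I E).ncard) '' V) := by
      refine ⟨(univ : Set (ι × ι)).ncard, ?_⟩
      rintro _ ⟨E, -, rfl⟩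
      exact ncard_le_ncard (subset_univ _) finite_univ
    obtain ⟨E, hE, he⟩ := Nat.sSup_mem hne hbd
    refine ⟨E, hE, fun E' hE' => ?_⟩
    have := le_csSup hbd ⟨E', hE', rfl⟩
    simp only at he
    rw [he]; exact this
  obtain ⟨K, hKc, hKv, -, hKs⟩ := exists_hull φ q0 (hQ.union (finite_range E))
  obtain ⟨R, hR, hKR⟩ := exists_dsk φ hKc
  have hQK : Q ⊆ K := subset_union_left.trans hKs
  have hEK : ∀ k, E k ∈ K := fun k => hKs (Or.inr ⟨k, rfl⟩)
  have hoE : ∀ k, o k ≠ E k := by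
    intro k h
    have := hEV k
    rw [← h, seg_self] at this
    exact hov k this.symm
  choose E' nE hE' sE using fun k => extendD (φ := φ) (hoE k) (hKR _ (hEK k)).le
  have hV' : ∀ k, v k ∈ seg (o k) (E' k) ∧ E k ∈ seg (v k) (E' k) := fun k => seg_trans (hE' k) (hEV k)
  have hI : I E' = I E := by
    symm
    refine eq_of_subset_of_ncard_le ?_ (hEmax E' (fun k => (hV' k).1)) (toFinite _)
    rintro ⟨k, l⟩ ⟨z, h1, h2⟩
    exact ⟨z, seg_sub_left (hV' k).2 h1, seg_sub_left (hV' l).2 h2⟩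
  have hXex : ∀ k, ∃ x ∈ K ∩ seg (v k) (E' k), ∀ y ∈ K ∩ seg (v k) (E' k), dist (v k) y ≤ dist (v k) x := by
    intro k
    obtain ⟨x, hx, hm⟩ := (hKc.inter (seg_compact (v k) (E' k))).exists_isMaxOn ⟨E k, hEK k, (hV' k).2⟩
      (f := fun y => dist (v k) y) (by fun_prop)
    exact ⟨x, hx, fun y hy => hm hy⟩
  choose X hX hXmax using hXex
  have hEX : ∀ k, E k ∈ seg (v k) (X k) := fun k =>
    seg_order (hV' k).2 (hX k).2 (hXmax k _ ⟨hEK k, (hV' k).2⟩)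
  have hXE : ∀ k, X k ∈ seg (E k) (E' k) := fun k => (seg_trans (hX k).2 (hEX k)).2
  have h4 : ∀ k, ∀ z ∈ seg (X k) (E' k), z ∈ K → z = X k := by
    intro k z hz hzK
    have h1 := seg_trans' (hX k).2 hz
    have h2 := hXmax k z ⟨hzK, h1.1⟩
    have h3 := mem_seg.1 h1.2
    have : dist (X k) z ≤ 0 := by linarith
    exact (dist_le_zero.1 this).symm
  refine ⟨K, R, X, E', hR, hKv, hQK, fun z hz => (hKR z hz).le, fun k => (hX k).1, nE, 
    fun k => (seg_sub_right (hXE k)).trans (sE k), h4, ?_, fun k => (seg_trans' (hV' k).1 (hX k).2).2⟩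
  rintro k l ⟨z, hzk, hzl⟩
  have hkl : (k, l) ∈ I E := by
    rw [← hI]
    exact ⟨z, seg_sub_right (hX k).2 hzk, seg_sub_right (hX l).2 hzl⟩
  obtain ⟨w, hwk, hwl⟩ := hkl
  have hk := (seg_trans (seg_trans' (hX k).2 hzk).2 (seg_sub_left (hEX k) hwk)).2
  have hl := (seg_trans (seg_trans' (hX l).2 hzl).2 (seg_sub_left (hEX l) hwl)).2
  rcases seg_total hk hl with h | h
  · exact (h4 k (X l) (seg_sub_left hzk h.2) (hX l).1).symm
  · exact h4 l (X k) (seg_sub_left hzl h.2) (hX k).1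

/-- crossing relation for four points -/
def Cr (K : Set S) (a b c d : S) : Prop :=
  ∀ x ∈ K, ∀ y ∈ K, ((seg a x ∪ seg x c) ∩ (seg b y ∪ seg y d)).Nonempty

theorem Cr.rot {K : Set S} {a b c d : S} (h : Cr K a b c d) : Cr K b c d a := by
  intro x hx y hy
  obtain ⟨z, h1, h2⟩ := h y hy x hx
  refine ⟨z, h2, ?_⟩
  rcases h1 with h1 | h1
  · exact Or.inr (mem_symm h1)
  · exact Or.inl (mem_symm h1)

theorem Cr.refl' {K : Set S} {a b c d : S} (h : Cr K a b c d) : Cr K d c b a := by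
  intro x hx y hy
  obtain ⟨z, h1, h2⟩ := h y hy x hx
  refine ⟨z, ?_, ?_⟩
  · rcases h2 with h1 | h1
    · exact Or.inr (mem_symm h1)
    · exact Or.inl (mem_symm h1)
  · rcases h1 with h1 | h1
    · exact Or.inr (mem_symm h1)
    · exact Or.inl (mem_symm h1)

theorem cr12 (K : Set S) (a c d : S) : Cr K a a c d := fun _ _ _ _ => ⟨a, Or.inl (left_mem _ _), Or.inl (left_mem _ _)⟩

theorem cr_of_rays {R : ℝ} (hR : 0 < R) {K : Set S} (hK : Cvx K) (hKD : K ⊆ Dsk φ R) {a b c d ea eb ec ed : S}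
    (ha : a ∈ K) (hb : b ∈ K) (hc : c ∈ K) (hd : d ∈ K)
    (na : ‖φ ea‖ = R) (nb : ‖φ eb‖ = R) (nc : ‖φ ec‖ = R) (nd : ‖φ ed‖ = R)
    (sa : seg a ea ⊆ Dsk φ R) (sb : seg b eb ⊆ Dsk φ R) (sc : seg c ec ⊆ Dsk φ R) (sd : seg d ed ⊆ Dsk φ R)
    (ka : ∀ z ∈ seg a ea, z ∈ K → z = a) (kb : ∀ z ∈ seg b eb, z ∈ K → z = b)
    (kc : ∀ z ∈ seg c ec, z ∈ K → z = c) (kd : ∀ z ∈ seg d ed, z ∈ K → z = d)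
    (ab : (seg a ea ∩ seg b eb).Nonempty → a = b) (ad : (seg a ea ∩ seg d ed).Nonempty → a = d)
    (cb : (seg c ec ∩ seg b eb).Nonempty → c = b) (cd : (seg c ec ∩ seg d ed).Nonempty → c = d)
    (h1 : ang φ ea < ang φ eb) (h2 : ang φ eb < ang φ ec) (h3 : ang φ ec < ang φ ed) : Cr K a b c d := by
  intro x hx y hy
  have J2 : ∀ u v w : S, JoinedIn (seg u w ∪ seg w v) u v := fun u v w =>
    ((seg_joined u w).mono subset_union_left).trans ((seg_joined w v).mono subset_union_right)
  have J4 : ∀ u v w eu ev : S, JoinedIn (seg u eu ∪ (seg u w ∪ seg w v) ∪ seg v ev) eu ev := fun u v w eu ev =>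
    ((((seg_joined u eu).symm.mono subset_union_left).trans 
      ((J2 u v w).mono subset_union_right)).mono subset_union_left).trans 
      ((seg_joined v ev).mono subset_union_right)
  have hA : seg a x ∪ seg x c ⊆ K := union_subset (hK _ ha _ hx) (hK _ hx _ hc)
  have hB : seg b y ∪ seg y d ⊆ K := union_subset (hK _ hb _ hy) (hK _ hy _ hd)
  have ma : a ∈ seg a x ∪ seg x c := Or.inl (left_mem _ _)
  have mc : c ∈ seg a x ∪ seg x c := Or.inr (right_mem _ _)
  have mb : b ∈ seg b y ∪ seg y d := Or.inl (left_mem _ _)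
  have md : d ∈ seg b y ∪ seg y d := Or.inr (right_mem _ _)
  obtain ⟨z, (z1 | z1) | z1, (z2 | z2) | z2⟩ := crossing hR (union_subset (union_subset sa (hA.trans hKD)) sc) 
    (union_subset (union_subset sb (hB.trans hKD)) sd) na nb nc nd h1 h2 h3 (J4 a c x ea ec) (J4 b d y eb ed)
  · exact ⟨a, ma, by rw [ab ⟨z, z1, z2⟩]; exact mb⟩
  · exact ⟨a, ma, by rw [← ka z z1 (hB z2)]; exact z2⟩
  · exact ⟨a, ma, by rw [ad ⟨z, z1, z2⟩]; exact md⟩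
  · exact ⟨b, by rw [← kb z z2 (hA z1)]; exact z1, mb⟩
  · exact ⟨z, z1, z2⟩
  · exact ⟨d, by rw [← kd z z2 (hA z1)]; exact z1, md⟩
  · exact ⟨c, mc, by rw [cb ⟨z, z1, z2⟩]; exact mb⟩
  · exact ⟨c, mc, by rw [← kc z z1 (hB z2)]; exact z2⟩
  · exact ⟨c, mc, by rw [cd ⟨z, z1, z2⟩]; exact md⟩

theorem exists_config (φ : S ≃ₜ ℂ) {Q : Set S} (hQ : Q.Finite) (hQ2 : Q.Nontrivial) :
    ∃ (K : Set S) (n : ℕ) (p : ℕ → S), Cvx K ∧ Q ⊆ K ∧ (∀ i, p i ∈ K) ∧ p n = p 0 ∧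
      (∀ i j k l, i ≤ j → j ≤ k → k ≤ l → l ≤ n → Cr K (p i) (p j) (p k) (p l)) ∧
      (∀ q ∈ Q, ∀ q' ∈ Q, q ≠ q' → ∃ a b, a < b ∧ b < n ∧ q ∈ seg (p a) (p b) ∧ q' ∈ seg (p a) (p b)) := by
  classical
  let ι := {k : S × S // k ∈ Q ×ˢ Q ∧ k.1 ≠ k.2}
  have hfin : Finite ι := ((hQ.prod hQ).subset (fun k hk => hk.1) : {k : S × S | k ∈ Q ×ˢ Q ∧ k.1 ≠ k.2}.Finite)
  obtain ⟨q0, hq0, q1, hq1, h01⟩ := hQ2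
  obtain ⟨K, R, X, E, hR, hK, hQK, hKD, hXK, nE, sE, kE, rE, hv⟩ := 
    exists_rays φ q0 hQ (fun k : ι => k.1.1) (fun k : ι => k.1.2) (fun k => k.2.2)
  have hTf : (range (fun k : ι => ang φ (E k))).Finite := finite_range _
  let T := hTf.toFinset
  have hT0 : 0 < T.card := Finset.card_pos.2 ⟨ang φ (E ⟨(q0, q1), ⟨hq0, hq1⟩, h01⟩), by simp [T]⟩
  have hch : ∀ i : Fin T.card, ∃ k : ι, ang φ (E k) = T.orderEmbOfFin rfl i := by
    intro i
    have := T.orderEmbOfFin_mem rfl i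
    exact hTf.mem_toFinset.1 this
  choose kk hkk using hch
  let κ : ℕ → ι := fun i => if h : i < T.card then kk ⟨i, h⟩ else kk ⟨0, hT0⟩
  have hκ : ∀ i j, i < j → j < T.card → ang φ (E (κ i)) < ang φ (E (κ j)) := by
    intro i j hij hj
    simp only [κ, dif_pos hj, dif_pos (hij.trans hj), hkk]
    exact (T.orderEmbOfFin rfl).strictMono (by simpa using hij)
  have hκn : κ T.card = κ 0 := by simp [κ, hT0]
  have gen : ∀ i j k l, ang φ (E i) < ang φ (E j) → ang φ (E j) < ang φ (E k) → ang φ (E k) < ang φ (E l) → 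
      Cr K (X i) (X j) (X k) (X l) := fun i j k l h1 h2 h3 =>
    cr_of_rays hR hK hKD (hXK i) (hXK j) (hXK k) (hXK l) (nE i) (nE j) (nE k) (nE l) (sE i) (sE j) (sE k) (sE l)
      (kE i) (kE j) (kE k) (kE l) (rE i j) (rE i l) (rE k j) (rE k l) h1 h2 h3
  refine ⟨K, T.card, fun i => X (κ i), hK, hQK, fun i => hXK _, by simp only [hκn], ?_, ?_⟩
  · intro i j k l hij hjk hkl hl
    rcases hij.eq_or_lt with rfl | hij
    · exact cr12 _ _ _ _
    rcases hjk.eq_or_lt with rfl | hjk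
    · exact (cr12 _ _ _ _).rot.rot.rot
    rcases hkl.eq_or_lt with rfl | hkl
    · exact (cr12 _ _ _ _).rot.rot
    rcases hl.eq_or_lt with rfl | hl
    · simp only [hκn]
      rcases Nat.eq_zero_or_pos i with rfl | hi
      · exact (cr12 _ _ _ _).rot
      · exact (gen _ _ _ _ (hκ 0 i hi (by omega)) (hκ i j hij (by omega)) (hκ j k hjk (by omega))).rot
    · exact gen _ _ _ _ (hκ i j hij (by omega)) (hκ j k hjk (by omega)) (hκ k l hkl (by omega))
  · intro q hq q' hq' hne
    let k : ι := ⟨(q', q), ⟨hq', hq⟩, hne.symm⟩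
    let k' : ι := ⟨(q, q'), ⟨hq, hq'⟩, hne⟩
    have h1 : q ∈ seg (X k) q' := mem_symm (hv k)
    have h2 : q' ∈ seg q (X k') := hv k'
    obtain ⟨c1, c2⟩ := concat h1 h2 hne
    have idx : ∀ k : ι, ∃ i < T.card, X (κ i) = X k := by
      intro k
      have hm : ang φ (E k) ∈ range (T.orderEmbOfFin rfl) := by
        rw [Finset.range_orderEmbOfFin]; simp [T]
      obtain ⟨i, hi⟩ := hm
      refine ⟨i, i.2, ?_⟩
      have : E (κ i) = E k := ang_inj (nE _) (nE _) (by simp only [κ, dif_pos i.2]; rw [hkk, hi])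
      exact rE _ _ ⟨E k, by rw [← this]; exact right_mem _ _, right_mem _ _⟩
    obtain ⟨i, hi, ei⟩ := idx k
    obtain ⟨j, hj, ej⟩ := idx k'
    rw [← ei, ← ej] at c1 c2
    rcases lt_trichotomy i j with h | h | h
    · exact ⟨i, j, h, hj, c1, c2⟩
    · subst h
      rw [seg_self] at c1 c2
      exact absurd (c1.trans c2.symm) hne
    · exact ⟨j, i, h, hi, mem_symm c1, mem_symm c2⟩
end
end BS

namespace BS
section
variable {S : Type*} [MetricSpace S] [Bus S]

theorem ord {X Y x y : S} (hx : x ∈ seg X Y) (hy : y ∈ seg X Y) (h : dist X x ≤ dist X y) :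
    x ∈ seg X y ∧ y ∈ seg x Y := ⟨seg_order hx hy h, (seg_trans hy (seg_order hx hy h)).2⟩

theorem t2gen {X Y C D D' o o' : S} (ho : o ∈ seg X Y) (ho' : o' ∈ seg X Y) (h : dist X o ≤ dist X o')
    (h1 : o ∈ seg C D') (h2 : o' ∈ seg C D) (h3 : (seg C D' ∩ (seg Y o' ∪ seg o' D)).Nonempty) :
    o' ∈ seg C D' := by
  obtain ⟨z, hz, h4 | h4⟩ := h3
  · have h5 := (ord ho ho' h).2
    have h6 : o' ∈ seg o z := (seg_trans' h5 (mem_symm h4)).2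
    exact seg_sub h1 hz h6
  · exact seg_sub_left hz (seg_trans' h2 h4).2

/-- raise a threshold -/
theorem t2pick {X Y C D D' o o' : S} (ho : o ∈ seg X Y) (ho' : o' ∈ seg X Y) 
    (h1 : o ∈ seg C D') (h2 : o' ∈ seg C D) (h3 : (seg C D' ∩ (seg Y o' ∪ seg o' D)).Nonempty) :
    ∃ x ∈ seg X Y, x ∈ seg C D' ∧ dist X o ≤ dist X x ∧ dist X o' ≤ dist X x := by
  rcases le_total (dist X o) (dist X o') with h | h
  · exact ⟨o', ho', t2gen ho ho' h h1 h2 h3, h, le_rfl⟩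
  · exact ⟨o, ho, h1, le_rfl, h⟩

theorem convmin {A B w x y : S} (hw : w ∈ seg A B) (hx : x ∈ seg w y) :
    dist A x + dist x B ≤ dist A y + dist y B := by
  have h1 := dist_conv A hx
  have h2 := dist_conv B hx
  rw [dist_comm B x, dist_comm B w, dist_comm B y] at h2
  have h3 := mem_seg.1 hw
  have h4 := dist_triangle A y B
  have h5 := mem_seg.1 hx
  by_cases h0 : dist w y = 0
  · have := dist_eq_zero.1 h0; subst this
    rw [seg_self] at hx; rw [hx]
  have hp : 0 < dist w y := lt_of_le_of_ne dist_nonneg (Ne.symm h0)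
  have h6 : dist w y * (dist A x + dist x B) ≤ dist w y * (dist A y + dist y B) := by
    have h7 : 0 ≤ dist x y := dist_nonneg
    have h8 : dist x y * (dist A w + dist w B) ≤ dist x y * (dist A y + dist y B) := by
      exact mul_le_mul_of_nonneg_left (by linarith) h7
    calc _ ≤ dist x y * (dist A w + dist w B) + dist w x * (dist A y + dist y B) := by linarith
      _ ≤ dist x y * (dist A y + dist y B) + dist w x * (dist A y + dist y B) := by linarith
      _ = (dist w x + dist x y) * (dist A y + dist y B) := by ring
      _ = _ := by rw [h5]
  exact le_of_mul_le_mul_left h6 hp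

theorem quad {X Y B B' x y : S} (hx : x ∈ seg X Y) (hy : y ∈ seg X Y) (h : dist X x ≤ dist X y)
    (hc : ((seg X x ∪ seg x B') ∩ (seg Y y ∪ seg y B)).Nonempty) :
    dist x B - dist x B' ≤ dist y B - dist y B' := by
  have key : ∀ z, z ∈ seg x B' → z ∈ seg y B → dist x B - dist x B' ≤ dist y B - dist y B' := by
    intro z h1 h2
    rw [mem_seg] at h1 h2
    have := dist_triangle x z B
    have := dist_triangle y z B'
    linarith
  obtain ⟨hxy, hyx⟩ := ord hx hy h
  obtain ⟨z, h1 | h1, h2 | h2⟩ := hc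
  · have h3 : x ∈ seg z y := (seg_trans hxy h1).2
    have h4 : y ∈ seg z Y := (seg_trans hy (seg_trans hxy h1).1).2
    have h5 : z ∈ seg y Y := mem_symm h2
    have e1 : y = z := by
      rw [mem_seg] at h4 h5
      rw [dist_comm y z] at h5
      exact (dist_le_zero.1 (by linarith [@dist_nonneg _ _ z y])).symm
    rw [← e1, seg_self] at h3
    rw [h3]
  · have h3 : x ∈ seg z y := (seg_trans hxy h1).2
    exact key x (left_mem _ _) (seg_sub_left h2 (mem_symm h3))
  · have h3 : y ∈ seg x z := (seg_trans' hyx (mem_symm h2)).2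
    exact key y (seg_sub_left h1 h3) (left_mem _ _)
  · exact key z h1 h2

/-- Gromov-product-like quantity -/
noncomputable def Mm (q A B : S) : ℝ := (dist A q + dist q B - dist A B) / 2

theorem Mm_zero {q A B : S} (h : q ∈ seg A B) : Mm q A B = 0 := by
  rw [mem_seg] at h; simp [Mm, h]

theorem local_mono {K : Set S} {X Y A A' B B' : S} (hXY : seg X Y ⊆ K)
    (c1 : Cr K X Y B' B) (c2 : Cr K X A A' Y) (c3 : Cr K A Y B' B) (c4 : Cr K A A' Y B) 
    (c5 : Cr K A A' Y B') (c6 : Cr K A' Y B' B) 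
    (m00 : (seg A B ∩ seg X Y).Nonempty) (m01 : (seg A B' ∩ seg X Y).Nonempty) 
    (m10 : (seg A' B ∩ seg X Y).Nonempty) (m11 : (seg A' B' ∩ seg X Y).Nonempty) 
    {f00 f01 f10 f11 : S → ℝ}
    (hf00 : ∀ x ∈ seg X Y, ∀ o ∈ seg X Y, o ∈ seg A B → (o ∈ seg X x → f00 x = Mm x A B) ∧ (o ∈ seg x Y → f00 x = 0))
    (hf01 : ∀ x ∈ seg X Y, ∀ o ∈ seg X Y, o ∈ seg A B' → (o ∈ seg X x → f01 x = Mm x A B') ∧ (o ∈ seg x Y → f01 x = 0))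
    (hf10 : ∀ x ∈ seg X Y, ∀ o ∈ seg X Y, o ∈ seg A' B → (o ∈ seg X x → f10 x = Mm x A' B) ∧ (o ∈ seg x Y → f10 x = 0))
    (hf11 : ∀ x ∈ seg X Y, ∀ o ∈ seg X Y, o ∈ seg A' B' → (o ∈ seg X x → f11 x = Mm x A' B') ∧ (o ∈ seg x Y → f11 x = 0))
    {q q' : S} (hq : q ∈ seg X Y) (hq' : q' ∈ seg X Y) (hqq : dist X q ≤ dist X q') :
    f00 q + f11 q - f01 q - f10 q ≤ f00 q' + f11 q' - f01 q' - f10 q' := by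
  -- Cr with the middle point on the chord
  have X00 := m00; have X01 := m01; have X10 := m10; have X11 := m11
  obtain ⟨x00, a00, b00⟩ := m00
  obtain ⟨o01, a01, b01⟩ := m01
  obtain ⟨o10, a10, b10⟩ := m10
  obtain ⟨o11, a11, b11⟩ := m11
  have absorb : ∀ {u v w : S}, w ∈ seg u v → seg u w ∪ seg w v ⊆ seg u v := fun hw =>
    union_subset (seg_sub_left hw) (seg_sub_right hw)
  obtain ⟨x01, e01, g01, -, l01⟩ := t2pick (X := X) (Y := Y) b01 b00 a01 a00 (by
    obtain ⟨z, h1, h2⟩ := c3 o01 (hXY b01) x00 (hXY b00)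
    exact ⟨z, absorb a01 h1, h2⟩)
  obtain ⟨x10, e10, g10, -, l10⟩ := t2pick (X := X) (Y := Y) (C := B) b10 b00 (mem_symm a10) (mem_symm a00) (by
    obtain ⟨z, h1, h2⟩ := c4 x00 (hXY b00) o10 (hXY b10)
    refine ⟨z, mem_symm (absorb a10 h2), ?_⟩
    rw [seg_symm Y, seg_symm x00 A, union_comm]; exact h1)
  replace g10 := mem_symm g10
  obtain ⟨y11, f1, f2, -, f3⟩ := t2pick (X := X) (Y := Y) (C := B') b11 e01 (mem_symm a11) (mem_symm g01) (by
    obtain ⟨z, h1, h2⟩ := c5 x01 (hXY e01) o11 (hXY b11)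
    refine ⟨z, mem_symm (absorb a11 h2), ?_⟩
    rw [seg_symm Y, seg_symm x01 A, union_comm]; exact h1)
  replace f2 := mem_symm f2
  obtain ⟨x11, e11, g11, l11, l11'⟩ := t2pick (X := X) (Y := Y) f1 e10 f2 g10 (by
    obtain ⟨z, h1, h2⟩ := c6 y11 (hXY f1) x10 (hXY e10)
    exact ⟨z, absorb f2 h1, h2⟩)
  replace l11 := f3.trans l11
  -- evaluation of the functions
  have ev : ∀ {f : S → ℝ} {P P' o : S}, (∀ x ∈ seg X Y, ∀ o ∈ seg X Y, o ∈ seg P P' → (o ∈ seg X x → f x = Mm x P P') ∧ (o ∈ seg x Y → f x = 0)) →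
      o ∈ seg X Y → o ∈ seg P P' → ∀ x ∈ seg X Y, (dist X o ≤ dist X x → f x = Mm x P P') ∧ (dist X x ≤ dist X o → f x = 0) := by
    intro f P P' o hf ho ho' x hx
    exact ⟨fun h => (hf x hx o ho ho').1 (ord ho hx h).1, fun h => (hf x hx o ho ho').2 (ord hx ho h).2⟩
  have v00 := ev hf00 b00 a00
  have v01 := ev hf01 e01 g01
  have v10 := ev hf10 e10 g10
  have v11 := ev hf11 e11 g11
  clear hf00 hf01 hf10 hf11 ev
  let F : S → ℝ := fun x => f00 x + f11 x - f01 x - f10 x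
  let Mono : S → S → Prop := fun u w => ∀ x ∈ seg X Y, ∀ y ∈ seg X Y, dist X u ≤ dist X x → dist X x ≤ dist X y → dist X y ≤ dist X w → F x ≤ F y
  have chain : ∀ u v w, v ∈ seg X Y → Mono u v → Mono v w → Mono u w := by
    intro u v w hv h1 h2 x hx y hy hux hxy hyw
    rcases le_total (dist X y) (dist X v) with c | c
    · exact h1 x hx y hy hux hxy c
    rcases le_total (dist X v) (dist X x) with d | d
    · exact h2 x hx y hy d hxy hyw
    · exact (h1 x hx v hv hux d le_rfl).trans (h2 v hv y hy le_rfl c hyw)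
  have p1 : Mono X x00 := by
    intro x hx y hy h1 h2 h3
    have : ∀ x ∈ seg X Y, dist X x ≤ dist X x00 → F x = 0 := by
      intro x hx h
      simp only [F, (v00 x hx).2 h, (v01 x hx).2 (h.trans l01), (v10 x hx).2 (h.trans l10), (v11 x hx).2 (h.trans (l01.trans l11))]
      ring
    rw [this x hx (h2.trans h3), this y hy h3]
  have p2 : ∀ v, dist X v ≤ dist X x01 → dist X v ≤ dist X x10 → Mono x00 v := by
    intro v hv1 hv2 x hx y hy h1 h2 h3
    have : ∀ x ∈ seg X Y, dist X x00 ≤ dist X x → dist X x ≤ dist X v → F x = Mm x A B := by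
      intro x hx h h'
      simp only [F, (v00 x hx).1 h, (v01 x hx).2 (h'.trans hv1), (v10 x hx).2 (h'.trans hv2), (v11 x hx).2 ((h'.trans hv1).trans l11)]
      ring
    rw [this x hx h1 (h2.trans h3), this y hy (h1.trans h2) h3]
    have := convmin (A := A) (B := B) (w := x00) (x := x) (y := y) a00 (seg_trans (ord hx hy h2).1 (ord b00 hx h1).1).2
    simp only [Mm]; linarith
  have p4 : ∀ v, dist X x01 ≤ dist X v → dist X x10 ≤ dist X v → Mono v x11 := by
    intro v hv1 hv2 x hx y hy h1 h2 h3
    have : ∀ x ∈ seg X Y, dist X v ≤ dist X x → dist X x ≤ dist X x11 → F x = Mm x A B - Mm x A B' - Mm x A' B := by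
      intro x hx h h'
      simp only [F, (v00 x hx).1 ((l01.trans hv1).trans h), (v01 x hx).1 (hv1.trans h), (v10 x hx).1 (hv2.trans h), (v11 x hx).2 h']
      ring
    rw [this x hx h1 (h2.trans h3), this y hy (h1.trans h2) h3]
    have := convmin (A := A') (B := B') (w := x11) (x := y) (y := x) g11 (mem_symm (seg_trans (ord hy e11 h3).1 (ord hx hy h2).1).2)
    simp only [Mm, dist_comm A x, dist_comm A' x, dist_comm A y, dist_comm A' y] at this ⊢; linarith
  have p5 : Mono x11 Y := by
    intro x hx y hy h1 h2 h3
    have : ∀ x ∈ seg X Y, dist X x11 ≤ dist X x → F x = Mm x A B + Mm x A' B' - Mm x A B' - Mm x A' B := by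
      intro x hx h
      simp only [F, (v00 x hx).1 ((l01.trans l11).trans h), (v01 x hx).1 (l11.trans h), (v10 x hx).1 (l11'.trans h), (v11 x hx).1 h]
    rw [this x hx h1, this y hy (h1.trans h2)]
    simp only [Mm]; linarith
  have pall : Mono X Y := by
    refine chain X x00 Y b00 p1 (chain x00 x11 Y e11 ?_ p5)
    rcases le_total (dist X x01) (dist X x10) with c | c
    · refine chain x00 x01 x11 e01 (p2 x01 le_rfl c) (chain x01 x10 x11 e10 ?_ (p4 x10 c le_rfl))
      intro x hx y hy h1 h2 h3
      have : ∀ x ∈ seg X Y, dist X x01 ≤ dist X x → dist X x ≤ dist X x10 → F x = Mm x A B - Mm x A B' := by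
        intro x hx h h'
        simp only [F, (v00 x hx).1 (l01.trans h), (v01 x hx).1 h, (v10 x hx).2 h', (v11 x hx).2 (h'.trans l11')]
        ring
      rw [this x hx h1 (h2.trans h3), this y hy (h1.trans h2) h3]
      have := quad hx hy h2 (c1 x (hXY hx) y (hXY hy))
      simp only [Mm]; linarith
    · refine chain x00 x10 x11 e10 (p2 x10 c le_rfl) (chain x10 x01 x11 e01 ?_ (p4 x01 le_rfl c))
      intro x hx y hy h1 h2 h3
      have : ∀ x ∈ seg X Y, dist X x10 ≤ dist X x → dist X x ≤ dist X x01 → F x = Mm x A B - Mm x A' B := by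
        intro x hx h h'
        simp only [F, (v00 x hx).1 (l10.trans h), (v10 x hx).1 h, (v01 x hx).2 h', (v11 x hx).2 (h'.trans l11)]
        ring
      rw [this x hx h1 (h2.trans h3), this y hy (h1.trans h2) h3]
      have := quad (B := A) (B' := A') hx hy h2 (by
        obtain ⟨z, z1, z2⟩ := c2 x (hXY hx) y (hXY hy)
        refine ⟨z, z1, ?_⟩
        rw [seg_symm Y, seg_symm y A, union_comm]; exact z2)
      simp only [Mm, dist_comm A x, dist_comm A' x, dist_comm A y, dist_comm A' y] at this ⊢; linarith
  refine pall q hq q' hq' (by simp) hqq ?_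
  have := mem_seg.1 hq'
  linarith [@dist_nonneg _ _ q' Y]
end
end BS

namespace BS
section
variable {S : Type*} [MetricSpace S] [Bus S]

def Vis (p : ℕ → S) (q : S) (k i j : ℕ) : Prop := ∀ z ∈ seg q (p k), z ∉ seg (p i) (p j)
def Inn (p : ℕ → S) (q : S) (i j : ℕ) : Prop := ∃ k, i < k ∧ k < j ∧ Vis p q k i j
open Classical in
noncomputable def Nn (p : ℕ → S) (i j : ℕ) (q : S) : ℝ := if Inn p q i j then Mm q (p i) (p j) else 0

def Star (K : Set S) (n : ℕ) (p : ℕ → S) : Prop :=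
  ∀ i j k l, i ≤ j → j ≤ k → k ≤ l → l ≤ n → Cr K (p i) (p j) (p k) (p l)

variable {K : Set S} {n : ℕ} {p : ℕ → S}

theorem Vis.nmem {q : S} {k i j : ℕ} (h : Vis p q k i j) : q ∉ seg (p i) (p j) := h q (left_mem _ _)
theorem Vis.ne1 {q : S} {k i j : ℕ} (h : Vis p q k i j) : k ≠ i := by
  rintro rfl; exact h _ (right_mem _ _) (left_mem _ _)
theorem Vis.ne2 {q : S} {k i j : ℕ} (h : Vis p q k i j) : k ≠ j := by
  rintro rfl; exact h _ (right_mem _ _) (right_mem _ _)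

theorem factA (hs : Star K n p) (hp : ∀ i, p i ∈ K) {q : S} (hq : q ∈ K) {i j k m : ℕ} (h1 : i < k) (h2 : k < j)
    (hj : j ≤ n) (hm : m ≤ n) (hmm : m ≤ i ∨ j ≤ m) (hv : Vis p q k i j) : ¬ Vis p q m i j := by
  intro hv'
  rcases hmm with h | h
  · obtain ⟨z, z1, z2⟩ := hs m i k j h h1.le h2.le hj q hq (p i) (hp i)
    have z3 : z ∈ seg (p i) (p j) := by
      rcases z2 with z2 | z2
      · rw [seg_self] at z2; rw [z2]; exact left_mem _ _
      · exact z2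
    rcases z1 with z1 | z1
    · exact hv' z (mem_symm z1) z3
    · exact hv z z1 z3
  · obtain ⟨z, z2, z1⟩ := hs i k j m h1.le h2.le h hm (p i) (hp i) q hq
    have z3 : z ∈ seg (p i) (p j) := by
      rcases z2 with z2 | z2
      · rw [seg_self] at z2; rw [z2]; exact left_mem _ _
      · exact z2
    rcases z1 with z1 | z1
    · exact hv z (mem_symm z1) z3
    · exact hv' z z1 z3

theorem vis_or {q : S} {a b i j : ℕ} (hq : q ∈ seg (p a) (p b)) (h : q ∉ seg (p i) (p j)) :
    Vis p q a i j ∨ Vis p q b i j := by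
  by_contra hc
  simp only [Vis, not_or, not_forall, not_not] at hc
  obtain ⟨⟨o, h1, h2⟩, ⟨o', h3, h4⟩⟩ := hc
  have h5 := (seg_trans hq (mem_symm h1)).2
  have h6 := (seg_trans' h5 h3).2
  exact h (seg_sub h2 h4 h6)

theorem N_M {q : S} {i j : ℕ} (h : q ∉ seg (p i) (p j) → ∃ k, i < k ∧ k < j ∧ Vis p q k i j) :
    Nn p i j q = Mm q (p i) (p j) := by
  unfold Nn
  split_ifs with hI
  · rfl
  · by_cases hc : q ∈ seg (p i) (p j)
    · rw [Mm_zero hc]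
    · exact absurd (h hc) hI

theorem N_0 (hs : Star K n p) (hp : ∀ i, p i ∈ K) {q : S} (hq : q ∈ K) {i j : ℕ} (hj : j ≤ n)
    (h : q ∉ seg (p i) (p j) → ∃ m, m ≤ n ∧ (m ≤ i ∨ j ≤ m) ∧ Vis p q m i j) : Nn p i j q = 0 := by
  unfold Nn
  rw [if_neg]
  rintro ⟨k, h1, h2, h3⟩
  obtain ⟨m, hm, hmm, hv⟩ := h h3.nmem
  exact factA hs hp hq h1 h2 hj hm hmm h3 hv

variable {a b : ℕ}

theorem N_out (hs : Star K n p) (hp : ∀ i, p i ∈ K) (hab : a < b) (hb : b < n) {q : S} (hqK : q ∈ K) (hq : q ∈ seg (p a) (p b))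
    {i j : ℕ} (hj : j ≤ n) (ha : a ≤ i ∨ j ≤ a) (hb' : b ≤ i ∨ j ≤ b) : Nn p i j q = 0 := by
  refine N_0 hs hp hqK hj fun h => ?_
  rcases vis_or hq h with h | h
  · exact ⟨a, by omega, ha, h⟩
  · exact ⟨b, by omega, hb', h⟩

theorem N_in (hab : a < b) {q : S} (hq : q ∈ seg (p a) (p b))
    {i j : ℕ} (ha : i ≤ a) (hb' : b ≤ j) : Nn p i j q = Mm q (p i) (p j) := by
  refine N_M fun h => ?_
  rcases vis_or hq h with h | h
  · have := h.ne1
    exact ⟨a, by omega, by omega, h⟩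
  · have := h.ne2
    exact ⟨b, by omega, by omega, h⟩

theorem corner1 (hs : Star K n p) (hp : ∀ i, p i ∈ K) (hK : Cvx K) {i j : ℕ} (h1 : a ≤ i) (h2 : i ≤ b) (h3 : b ≤ j) (h4 : j ≤ n) :
    ∀ x ∈ seg (p a) (p b), ∀ o ∈ seg (p a) (p b), o ∈ seg (p i) (p j) →
      (o ∈ seg (p a) x → Nn p i j x = Mm x (p i) (p j)) ∧ (o ∈ seg x (p b) → Nn p i j x = 0) := by
  intro x hx o ho ho'
  refine ⟨fun h => N_M fun hn => ?_, fun h => N_0 hs hp (hK _ (hp a) _ (hp b) hx) h4 fun hn => ?_⟩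
  · rcases vis_or hx hn with hv | hv
    · exact absurd ho' (hv _ (mem_symm h))
    · have := hv.ne1; have := hv.ne2
      exact ⟨b, by omega, by omega, hv⟩
  · rcases vis_or hx hn with hv | hv
    · exact ⟨a, by omega, by omega, hv⟩
    · exact absurd ho' (hv _ h)

theorem corner2 (hs : Star K n p) (hp : ∀ i, p i ∈ K) (hK : Cvx K) {i j : ℕ} (h1 : i ≤ a) (h2 : a ≤ j) (h3 : j ≤ b) (h4 : b ≤ n) :
    ∀ x ∈ seg (p b) (p a), ∀ o ∈ seg (p b) (p a), o ∈ seg (p i) (p j) →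
      (o ∈ seg (p b) x → Nn p i j x = Mm x (p i) (p j)) ∧ (o ∈ seg x (p a) → Nn p i j x = 0) := by
  intro x hx o ho ho'
  refine ⟨fun h => N_M fun hn => ?_, fun h => N_0 hs hp (hK _ (hp b) _ (hp a) hx) (by omega) fun hn => ?_⟩
  · rcases vis_or hx hn with hv | hv
    · exact absurd ho' (hv _ (mem_symm h))
    · have := hv.ne1; have := hv.ne2
      exact ⟨a, by omega, by omega, hv⟩
  · rcases vis_or hx hn with hv | hv
    · exact ⟨b, by omega, by omega, hv⟩
    · exact absurd ho' (hv _ h)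

theorem meet (hs : Star K n p) (hp : ∀ i, p i ∈ K) {a i b j : ℕ} (h1 : a ≤ i) (h2 : i ≤ b) (h3 : b ≤ j) (h4 : j ≤ n) :
    (seg (p i) (p j) ∩ seg (p a) (p b)).Nonempty := by
  obtain ⟨z, z1, z2⟩ := hs a i b j h1 h2 h3 h4 (p a) (hp a) (p i) (hp i)
  refine ⟨z, ?_, ?_⟩
  · rcases z2 with z2 | z2
    · rw [seg_self] at z2; rw [z2]; exact left_mem _ _
    · exact z2
  · rcases z1 with z2 | z2
    · rw [seg_self] at z2; rw [z2]; exact left_mem _ _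
    · exact z2

noncomputable def Ph (p : ℕ → S) (k l : ℕ) (q : S) : ℝ := 
  Nn p k (l+1) q + Nn p (k+1) l q - Nn p k l q - Nn p (k+1) (l+1) q

theorem ph1 (hs : Star K n p) (hp : ∀ i, p i ∈ K) (hK : Cvx K) {k l : ℕ} (h1 : a ≤ k) (h2 : k < b) (h3 : b ≤ l) (h4 : l < n)
    {q q' : S} (hq : q ∈ seg (p a) (p b)) (hq' : q' ∈ seg (p a) (p b)) (hqq : dist (p a) q ≤ dist (p a) q') :
    Ph p k l q ≤ Ph p k l q' := by
  refine local_mono (hK _ (hp a) _ (hp b)) (A := p k) (A' := p (k+1)) (B' := p l) (B := p (l+1))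
    (hs _ _ _ _ ?_ ?_ ?_ ?_) (hs _ _ _ _ ?_ ?_ ?_ ?_) (hs _ _ _ _ ?_ ?_ ?_ ?_) (hs _ _ _ _ ?_ ?_ ?_ ?_)
    (hs _ _ _ _ ?_ ?_ ?_ ?_) (hs _ _ _ _ ?_ ?_ ?_ ?_) (meet hs hp ?_ ?_ ?_ ?_) (meet hs hp ?_ ?_ ?_ ?_)
    (meet hs hp ?_ ?_ ?_ ?_) (meet hs hp ?_ ?_ ?_ ?_)
    (corner1 hs hp hK ?_ ?_ ?_ ?_) (corner1 hs hp hK ?_ ?_ ?_ ?_) (corner1 hs hp hK ?_ ?_ ?_ ?_) (corner1 hs hp hK ?_ ?_ ?_ ?_)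
    hq hq' hqq <;> omega

theorem ph2 (hs : Star K n p) (hp : ∀ i, p i ∈ K) (hK : Cvx K) {k l : ℕ} (h1 : k < a) (h2 : a ≤ l) (h3 : l < b) (h4 : b ≤ n)
    {q q' : S} (hq : q ∈ seg (p b) (p a)) (hq' : q' ∈ seg (p b) (p a)) (hqq : dist (p b) q ≤ dist (p b) q') :
    Ph p k l q ≤ Ph p k l q' := by
  have mt : ∀ i j, i ≤ a → a ≤ j → j ≤ b → (seg (p i) (p j) ∩ seg (p b) (p a)).Nonempty := by
    intro i j u v w
    rw [seg_symm (p b), inter_comm]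
    exact meet hs hp u v w h4
  refine local_mono (hK _ (hp b) _ (hp a)) (A := p k) (A' := p (k+1)) (B' := p l) (B := p (l+1))
    (hs a l (l+1) b ?_ ?_ ?_ ?_).rot.rot.rot (hs k (k+1) a b ?_ ?_ ?_ ?_).rot.rot.rot (hs _ _ _ _ ?_ ?_ ?_ ?_) (hs _ _ _ _ ?_ ?_ ?_ ?_)
    (hs _ _ _ _ ?_ ?_ ?_ ?_) (hs _ _ _ _ ?_ ?_ ?_ ?_) (mt _ _ ?_ ?_ ?_) (mt _ _ ?_ ?_ ?_)
    (mt _ _ ?_ ?_ ?_) (mt _ _ ?_ ?_ ?_)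
    (corner2 hs hp hK ?_ ?_ ?_ ?_) (corner2 hs hp hK ?_ ?_ ?_ ?_) (corner2 hs hp hK ?_ ?_ ?_ ?_) (corner2 hs hp hK ?_ ?_ ?_ ?_)
    hq hq' hqq <;> omega

theorem tele (f : ℕ → ℕ → ℝ) {a b c d : ℕ} (hab : a ≤ b) (hcd : c ≤ d) :
    ∑ k ∈ Finset.Ico a b, ∑ l ∈ Finset.Ico c d, (f k (l+1) + f (k+1) l - f k l - f (k+1) (l+1)) 
      = f a d + f b c - f a c - f b d := by
  have h1 : ∀ k, ∑ l ∈ Finset.Ico c d, (f k (l+1) + f (k+1) l - f k l - f (k+1) (l+1)) 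
      = (f k d - f (k+1) d) - (f k c - f (k+1) c) := by
    intro k
    rw [← Finset.sum_Ico_sub (fun l => f k l - f (k+1) l) hcd]
    exact Finset.sum_congr rfl fun l _ => by ring
  simp only [h1]
  have h2 := Finset.sum_Ico_sub (fun k => f k c - f k d) hab
  rw [show f a d + f b c - f a c - f b d = (f b c - f b d) - (f a c - f a d) by ring, ← h2]
  exact Finset.sum_congr rfl fun l _ => by ring

noncomputable def Gg (p : ℕ → S) (k l : ℕ) (q : S) : ℝ := if k < l then Ph p k l q else 0

theorem main_ord (hs : Star K n p) (hp : ∀ i, p i ∈ K) (hK : Cvx K) (h0 : p n = p 0) (hab : a < b) (hb : b < n) 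
    {q q' : S} (hq : q ∈ seg (p a) (p b)) (hq' : q' ∈ seg (p a) (p b)) (hqq : dist (p a) q ≤ dist (p a) q') :
    ∑ k ∈ Finset.range n, ∑ l ∈ Finset.range n, |Gg p k l q - Gg p k l q'| = dist q q' := by
  have hqK := hK _ (hp a) _ (hp b) hq
  have hqK' := hK _ (hp a) _ (hp b) hq'
  have out := fun {i j : ℕ} => N_out hs hp hab hb hqK hq (i := i) (j := j)
  have out' := fun {i j : ℕ} => N_out hs hp hab hb hqK' hq' (i := i) (j := j)
  have inn := fun {i j : ℕ} => N_in hab hq (i := i) (j := j)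
  have inn' := fun {i j : ℕ} => N_in hab hq' (i := i) (j := j)
  obtain ⟨o1, o2⟩ := ord hq hq' hqq
  have E0 : ∀ k l, k < l → l < n → ((b ≤ k) ∨ (a ≤ k ∧ l < b) ∨ l < a) → |Gg p k l q - Gg p k l q'| = 0 := by
    intro k l h1 h2 h3
    simp only [Gg, if_pos h1, Ph]
    rw [out (by omega) (by omega) (by omega), out (by omega) (by omega) (by omega), out (by omega) (by omega) (by omega),
      out (by omega) (by omega) (by omega), out' (by omega) (by omega) (by omega), out' (by omega) (by omega) (by omega), out' (by omega) (by omega) (by omega),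
      out' (by omega) (by omega) (by omega)]
    simp
  have E00 : ∀ k l, ¬ k < l → |Gg p k l q - Gg p k l q'| = 0 := by
    intro k l h1
    simp [Gg, h1]
  have E1 : ∀ k l, k < a → b ≤ l → |Gg p k l q - Gg p k l q'| = 0 := by
    intro k l h1 h2
    have h3 : k < l := by omega
    simp only [Gg, if_pos h3, Ph]
    rw [inn (by omega) (by omega), inn (by omega) (by omega), inn (by omega) (by omega), inn (by omega) (by omega), 
      inn' (by omega) (by omega), inn' (by omega) (by omega), inn' (by omega) (by omega), inn' (by omega) (by omega)]
    rw [abs_eq_zero]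
    simp only [Mm]; ring
  have E2 : ∀ k l, a ≤ k → k < b → b ≤ l → l < n → |Gg p k l q - Gg p k l q'| = Ph p k l q' - Ph p k l q := by
    intro k l h1 h2 h3 h4
    have h5 : k < l := by omega
    simp only [Gg, if_pos h5]
    rw [abs_sub_comm, abs_of_nonneg]
    linarith [ph1 hs hp hK h1 h2 h3 h4 hq hq' hqq]
  have E3 : ∀ k l, k < a → a ≤ l → l < b → |Gg p k l q - Gg p k l q'| = Ph p k l q - Ph p k l q' := by
    intro k l h1 h2 h3 
    have h5 : k < l := by omega
    simp only [Gg, if_pos h5]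
    rw [abs_of_nonneg]
    have h6 : dist (p b) q' ≤ dist (p b) q := by
      rw [mem_seg] at hq hq'
      rw [dist_comm _ q, dist_comm _ q']; linarith
    linarith [ph2 hs hp hK h1 h2 h3 hb.le (mem_symm hq') (mem_symm hq) h6]
  have split : ∀ f : ℕ → ℝ, ∑ k ∈ Finset.range n, f k = ∑ k ∈ Finset.Ico 0 a, f k + ∑ k ∈ Finset.Ico a b, f k + ∑ k ∈ Finset.Ico b n, f k := by
    intro f
    rw [Finset.sum_Ico_consecutive _ (by omega) hab.le, Finset.sum_Ico_consecutive _ (by omega) hb.le, Finset.range_eq_Ico]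
  rw [split]
  have S1 : ∑ k ∈ Finset.Ico 0 a, ∑ l ∈ Finset.range n, |Gg p k l q - Gg p k l q'| = 
      Mm q (p 0) (p b) - Mm q' (p 0) (p b) := by
    have : ∀ k ∈ Finset.Ico 0 a, ∑ l ∈ Finset.range n, |Gg p k l q - Gg p k l q'| = 
       ∑ l ∈ Finset.Ico a b, Ph p k l q - ∑ l ∈ Finset.Ico a b, Ph p k l q' := by
      intro k hk
      rw [Finset.mem_Ico] at hk
      rw [split, Finset.sum_eq_zero, Finset.sum_eq_zero (s := Finset.Ico b n), zero_add, add_zero, ← Finset.sum_sub_distrib]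
      · refine Finset.sum_congr rfl fun l hl => ?_
        rw [Finset.mem_Ico] at hl
        exact E3 k l hk.2 hl.1 hl.2
      · intro l hl
        rw [Finset.mem_Ico] at hl
        exact E1 k l hk.2 hl.1
      · intro l hl
        rw [Finset.mem_Ico] at hl
        by_cases h : k < l
        · exact E0 k l h (by omega) (by omega)
        · exact E00 k l h
    rw [Finset.sum_congr rfl this, Finset.sum_sub_distrib]
    have t1 := tele (fun i j => Nn p i j q) (Nat.zero_le a) hab.le
    have t2 := tele (fun i j => Nn p i j q') (Nat.zero_le a) hab.le
    simp only [Ph]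
    rw [t1, t2, inn (by omega) (by omega), out (by omega) (by omega) (by omega), out (by omega) (by omega) (by omega),
      out (by omega) (by omega) (by omega), inn' (by omega) (by omega), out' (by omega) (by omega) (by omega), out' (by omega) (by omega) (by omega),
      out' (by omega) (by omega) (by omega)]
    ring
  have S2 : ∑ k ∈ Finset.Ico a b, ∑ l ∈ Finset.range n, |Gg p k l q - Gg p k l q'| = 
      Mm q' (p a) (p n) - Mm q (p a) (p n) := by
    have : ∀ k ∈ Finset.Ico a b, ∑ l ∈ Finset.range n, |Gg p k l q - Gg p k l q'| = 
       ∑ l ∈ Finset.Ico b n, Ph p k l q' - ∑ l ∈ Finset.Ico b n, Ph p k l q := by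
      intro k hk
      rw [Finset.mem_Ico] at hk
      rw [split, Finset.sum_eq_zero, Finset.sum_eq_zero (s := Finset.Ico a b), zero_add, zero_add, ← Finset.sum_sub_distrib]
      · refine Finset.sum_congr rfl fun l hl => ?_
        rw [Finset.mem_Ico] at hl
        exact E2 k l hk.1 hk.2 hl.1 hl.2
      · intro l hl
        rw [Finset.mem_Ico] at hl
        by_cases h : k < l
        · exact E0 k l h (by omega) (by omega)
        · exact E00 k l h
      · intro l hl
        rw [Finset.mem_Ico] at hl
        by_cases h : k < l
        · exact E0 k l h (by omega) (by omega)
        · exact E00 k l h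
    rw [Finset.sum_congr rfl this, Finset.sum_sub_distrib]
    have t1 := tele (fun i j => Nn p i j q) hab.le hb.le
    have t2 := tele (fun i j => Nn p i j q') hab.le hb.le
    simp only [Ph]
    rw [t1, t2, inn (by omega) (by omega), out (by omega) (by omega) (by omega), out (by omega) (by omega) (by omega),
      out (by omega) (by omega) (by omega), inn' (by omega) (by omega), out' (by omega) (by omega) (by omega), out' (by omega) (by omega) (by omega),
      out' (by omega) (by omega) (by omega)]
    ring
  have S3 : ∑ k ∈ Finset.Ico b n, ∑ l ∈ Finset.range n, |Gg p k l q - Gg p k l q'| = 0 := by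
    refine Finset.sum_eq_zero fun k hk => Finset.sum_eq_zero fun l hl => ?_
    rw [Finset.mem_Ico] at hk
    rw [Finset.mem_range] at hl
    by_cases h : k < l
    · exact E0 k l h (by omega) (by omega)
    · exact E00 k l h
  rw [S1, S2, S3, h0]
  simp only [Mm]
  rw [mem_seg] at o1 o2
  have := dist_comm q (p 0)
  have := dist_comm q' (p 0)
  linarith

theorem final (φ : S ≃ₜ ℂ) {Q : Set S} (hQ : Q.Finite) : ∃ (N : ℕ) (φ : S → Fin N → ℝ),
      ∀ x ∈ Q, ∀ y ∈ Q, (∑ i : Fin N, |φ x i - φ y i|) = dist x y := by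
  rcases Q.subsingleton_or_nontrivial with h | h
  · refine ⟨0, fun _ _ => 0, fun x hx y hy => ?_⟩
    rw [h hx hy]; simp
  obtain ⟨K, n, p, hK, -, hp, h0, hs, hc⟩ := exists_config φ hQ h
  refine ⟨n * n, fun x i => Gg p (finProdFinEquiv.symm i).1 (finProdFinEquiv.symm i).2 x, fun x hx y hy => ?_⟩
  rw [Equiv.sum_comp finProdFinEquiv.symm (fun i : Fin n × Fin n => |Gg p i.1 i.2 x - Gg p i.1 i.2 y|),
    Fintype.sum_prod_type]
  by_cases hxy : x = y
  · subst hxy; simp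
  obtain ⟨a, b, hab, hb, h1, h2⟩ := hc x hx y hy hxy
  have e : ∀ x y : S, ∑ k : Fin n, ∑ l : Fin n, |Gg p k l x - Gg p k l y| = 
      ∑ k ∈ Finset.range n, ∑ l ∈ Finset.range n, |Gg p k l x - Gg p k l y| := by
    intro x y
    rw [Finset.sum_range]
    refine Finset.sum_congr rfl fun k _ => ?_
    rw [Finset.sum_range]
  rw [e]
  rcases le_total (dist (p a) x) (dist (p a) y) with h3 | h3
  · exact main_ord hs hp hK h0 hab hb h1 h2 h3
  · have := main_ord hs hp hK h0 hab hb h2 h1 h3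
    rw [dist_comm, ← this]
    simp only [abs_sub_comm]
end
end BS

/-- any finite subset of a Busemann surface is `l₁`-embeddable. -/
theorem busemann_surface_finite_l1_embeddable {S : Type*} [MetricSpace S]
    (hS : IsBusemannSurface S)
    (Q : Set S) (hQfin : Q.Finite) :
    ∃ (N : ℕ) (φ : S → Fin N → ℝ),
      ∀ x ∈ Q, ∀ y ∈ Q, (∑ i : Fin N, |φ x i - φ y i|) = dist x y := by
  obtain ⟨h1, ⟨e⟩⟩ := hS
  haveI := BS.bus_of h1
  exact BS.final (e.trans Complex.equivRealProdCLM.symm.toHomeomorph) hQfin
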